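/- arXiv:1010.0226 — 3 statements merged into one kernel-verified Lean document; each statement's English description precedes it below -/
import Mathlib

section
/- Rate converse of the side-information characterization: if the triple (R, D, E) is achievable, then R ≥ R(D, E), where R(D, E) is the infimum of I(X_r, X_h ; U) − I(Z ; U) over all (D, E)-admissible single-letter choices (p(u | x_r, x_h), g). -/
open scoped BigOperators

/-- A function `p : α → ℝ` on a finite alphabet is a probability mass function. -/
def IsPMF {α : Type} [Fintype α] (p : α → ℝ) : Prop :=
  (∀ a, 0 ≤ p a) ∧ ∑ a, p a = 1

/-- Shannon entropy (base-2) of a pmf on a finite alphabet, with the convention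
`0 · log 0 = 0` (automatic since `Real.logb 2 0 = 0`). -/
noncomputable def H2 {α : Type} [Fintype α] (p : α → ℝ) : ℝ :=
  -∑ a, p a * Real.logb 2 (p a)

/-- Conditional Shannon entropy `H(A | B)` computed from a joint pmf on `α × β`
(first coordinate the variable, second the conditioning variable):
`H(A | B) = H(A, B) - H(B)`. -/
noncomputable def condH2 {α β : Type} [Fintype α] [Fintype β] (p : α × β → ℝ) : ℝ :=
  H2 p - H2 (fun b => ∑ a, p (a, b))

/-- Mutual information `I(A ; B)` computed from a joint pmf on `α × β`:
`I(A ; B) = H(A) + H(B) - H(A, B)`. -/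
noncomputable def MI2 {α β : Type} [Fintype α] [Fintype β] (p : α × β → ℝ) : ℝ :=
  H2 (fun a => ∑ b, p (a, b)) + H2 (fun b => ∑ a, p (a, b)) - H2 p

/-- Average per-letter distortion of an `(n, M)` code. -/
noncomputable def codeDistortion {Xr Xh Z Xhat : Type}
    [Fintype Xr] [Fintype Xh] [Fintype Z] [Fintype Xhat]
    (p : Xr × Xh × Z → ℝ) (d : Xr × Xhat → ℝ) (n M : ℕ)
    (enc : (Fin n → Xr × Xh) → Fin M)
    (dec : Fin M × (Fin n → Z) → Fin n → Xhat) : ℝ :=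
  ∑ s : Fin n → Xr × Xh × Z,
    (∏ i, p (s i)) *
      ((n : ℝ)⁻¹ * ∑ i, d ((s i).1,
        dec (enc fun j => ((s j).1, (s j).2.1), fun j => (s j).2.2) i))

/-- Equivocation `(1/n) H(X_h^n | W, Z^n)` of an `(n, M)` code. -/
noncomputable def codeEquivocation {Xr Xh Z : Type}
    [Fintype Xr] [Fintype Xh] [Fintype Z]
    (p : Xr × Xh × Z → ℝ) (n M : ℕ)
    (enc : (Fin n → Xr × Xh) → Fin M) : ℝ :=
  (n : ℝ)⁻¹ * condH2 (fun q : (Fin n → Xh) × (Fin M × (Fin n → Z)) =>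
    ∑ xr : Fin n → Xr,
      if enc (fun i => (xr i, q.1 i)) = q.2.1 then ∏ i, p (xr i, q.1 i, q.2.2 i) else 0)

/-- `(D, E)` is an achievable utility–privacy pair. -/
def AchievablePair {Xr Xh Z Xhat : Type}
    [Fintype Xr] [Fintype Xh] [Fintype Z] [Fintype Xhat]
    (p : Xr × Xh × Z → ℝ) (d : Xr × Xhat → ℝ) (D E : ℝ) : Prop :=
  ∀ ε > 0, ∃ (n M : ℕ) (enc : (Fin n → Xr × Xh) → Fin M)
      (dec : Fin M × (Fin n → Z) → Fin n → Xhat),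
    0 < n ∧ 0 < M ∧
    codeDistortion p d n M enc dec ≤ D + ε ∧
    E - ε ≤ codeEquivocation p n M enc

/-- `(R, D, E)` is an achievable rate–distortion–equivocation triple. -/
def AchievableTriple {Xr Xh Z Xhat : Type}
    [Fintype Xr] [Fintype Xh] [Fintype Z] [Fintype Xhat]
    (p : Xr × Xh × Z → ℝ) (d : Xr × Xhat → ℝ) (R D E : ℝ) : Prop :=
  ∀ ε > 0, ∃ (n M : ℕ) (enc : (Fin n → Xr × Xh) → Fin M)
      (dec : Fin M × (Fin n → Z) → Fin n → Xhat),
    0 < n ∧ 0 < M ∧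
    (M : ℝ) ≤ (2 : ℝ) ^ ((n : ℝ) * (R + ε)) ∧
    codeDistortion p d n M enc dec ≤ D + ε ∧
    E - ε ≤ codeEquivocation p n M enc

/-- Single-letter expected distortion `E[d(X_r, g(U, Z))]` under the joint law
`p(x_r, x_h, z) p(u | x_r, x_h)` (so that `U — (X_r, X_h) — Z` is a Markov chain). -/
noncomputable def slDistortion {Xr Xh Z Xhat U : Type}
    [Fintype Xr] [Fintype Xh] [Fintype Z] [Fintype Xhat] [Fintype U]
    (p : Xr × Xh × Z → ℝ) (d : Xr × Xhat → ℝ)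
    (pu : Xr × Xh → U → ℝ) (g : U × Z → Xhat) : ℝ :=
  ∑ x : Xr × Xh × Z, ∑ u : U, p x * pu (x.1, x.2.1) u * d (x.1, g (u, x.2.2))

/-- Single-letter equivocation `H(X_h | U, Z)` under the joint law
`p(x_r, x_h, z) p(u | x_r, x_h)`. -/
noncomputable def slEquivocation {Xr Xh Z U : Type}
    [Fintype Xr] [Fintype Xh] [Fintype Z] [Fintype U]
    (p : Xr × Xh × Z → ℝ) (pu : Xr × Xh → U → ℝ) : ℝ :=
  condH2 (fun q : Xh × (U × Z) =>
    ∑ xr : Xr, p (xr, q.1, q.2.2) * pu (xr, q.1) q.2.1)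

/-- Single-letter rate `I(X_r, X_h ; U) - I(Z ; U)` under the joint law
`p(x_r, x_h, z) p(u | x_r, x_h)`. -/
noncomputable def slRate {Xr Xh Z U : Type}
    [Fintype Xr] [Fintype Xh] [Fintype Z] [Fintype U]
    (p : Xr × Xh × Z → ℝ) (pu : Xr × Xh → U → ℝ) : ℝ :=
  MI2 (fun q : (Xr × Xh) × U => (∑ z, p (q.1.1, q.1.2, z)) * pu q.1 q.2) -
    MI2 (fun q : Z × U => ∑ xr : Xr, ∑ xh : Xh, p (xr, xh, q.1) * pu (xr, xh) q.2)

/-- `Γ(D)`: supremum of `H(X_h | U, Z)` over all `D`-admissible single-letter choices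
`(p(u | x_r, x_h), g)`; since the auxiliary alphabet is finite it may be taken to be
`Fin k` for some `k`. -/
noncomputable def Gamma {Xr Xh Z Xhat : Type}
    [Fintype Xr] [Fintype Xh] [Fintype Z] [Fintype Xhat]
    (p : Xr × Xh × Z → ℝ) (d : Xr × Xhat → ℝ) (D : ℝ) : ℝ :=
  sSup { e : ℝ | ∃ (k : ℕ) (pu : Xr × Xh → Fin k → ℝ) (g : Fin k × Z → Xhat),
    (∀ a, IsPMF (pu a)) ∧ slDistortion p d pu g ≤ D ∧ e = slEquivocation p pu }

/-- `R(D, E)`: infimum of `I(X_r, X_h ; U) - I(Z ; U)` over all `(D, E)`-admissible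
single-letter choices `(p(u | x_r, x_h), g)`. -/
noncomputable def RDE {Xr Xh Z Xhat : Type}
    [Fintype Xr] [Fintype Xh] [Fintype Z] [Fintype Xhat]
    (p : Xr × Xh × Z → ℝ) (d : Xr × Xhat → ℝ) (D E : ℝ) : ℝ :=
  sInf { r : ℝ | ∃ (k : ℕ) (pu : Xr × Xh → Fin k → ℝ) (g : Fin k × Z → Xhat),
    (∀ a, IsPMF (pu a)) ∧ slDistortion p d pu g ≤ D ∧
    E ≤ slEquivocation p pu ∧ r = slRate p pu }

/-!
Put `U_i = (W, (Z_j)_{j ≠ i})`. Given `(X_{r,i}, X_{h,i})` it is independent of `Z_i`, so it is an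
auxiliary variable for the `i`-th letter. Since `(U_i, Z_i)` carries the same information as
`(W, Z^n)`, subadditivity of conditional entropy bounds the quantities of a block code by averages
of single-letter ones.

The alphabet of `U_i` grows with `n`, so letting `ε → 0` needs the triples (distortion,
`H(X_h | U, Z)`, `H(X_r, X_h | U, Z)`) over all finite auxiliary alphabets to form a convex compact
set. Each value `u` contributes to such a triple a continuous function of the column `p(u | ·)`
that is homogeneous of degree one. The set is therefore a linear image of an affine slice of the
convex hull of a compact set in a finite-dimensional space. The rate is
`H(X_r, X_h | Z) - H(X_r, X_h | U, Z)`, an affine function of the third coordinate.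
-/

theorem convexHull_eq_iUnion_image_stdSimplex {V : Type*} [AddCommGroup V] [Module ℝ V]
    [FiniteDimensional ℝ V] (s : Set V) :
    convexHull ℝ s = ⋃ n ∈ Set.Iic (Module.finrank ℝ V + 1),
      (fun q : (Fin n → ℝ) × (Fin n → V) => ∑ i, q.1 i • q.2 i) ''
        (stdSimplex ℝ (Fin n) ×ˢ Set.univ.pi fun _ => s) := by
  refine Set.Subset.antisymm (fun x hx => ?_) (Set.iUnion₂_subset fun n _ => ?_)
  · obtain ⟨ι, _, z, w, hz, hind, hw, hw1, rfl⟩ := eq_pos_convex_span_of_mem_convexHull hx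
    have hcard : Fintype.card ι ≤ Module.finrank ℝ V + 1 :=
      hind.card_le_finrank_succ.trans (Nat.succ_le_succ (Submodule.finrank_le _))
    let e := (Fintype.equivFin ι).symm
    refine Set.mem_biUnion hcard ⟨(w ∘ e, z ∘ e), ⟨⟨fun i => (hw _).le, ?_⟩, fun i _ => ?_⟩, ?_⟩
    · exact (e.sum_comp w).trans hw1
    · exact hz ⟨e i, rfl⟩
    · exact e.sum_comp fun i => w i • z i
  · rintro _ ⟨⟨w, z⟩, ⟨⟨hw, hw1⟩, hz⟩, rfl⟩
    exact mem_convexHull_of_exists_fintype w z hw hw1 (fun i => hz i trivial) rfl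

theorem isCompact_convexHull {V : Type*} [AddCommGroup V] [Module ℝ V] [TopologicalSpace V]
    [ContinuousAdd V] [ContinuousSMul ℝ V] [FiniteDimensional ℝ V]
    {s : Set V} (hs : IsCompact s) : IsCompact (convexHull ℝ s) := by
  rw [convexHull_eq_iUnion_image_stdSimplex]
  refine (Set.finite_Iic _).isCompact_biUnion fun n _ => IsCompact.image ?_ (by fun_prop)
  exact (isCompact_stdSimplex ℝ (Fin n)).prod (isCompact_univ_pi fun _ => hs)

theorem exists_mem_stdSimplex_sum_smul_eq {X : Type*} [Fintype X] [Nonempty X] {t : X → ℝ}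
    (ht : ∀ x, 0 ≤ t x) : ∃ v ∈ stdSimplex ℝ X, (∑ x, t x) • v = t := by
  classical
  rcases eq_or_ne (∑ x, t x) 0 with h | h
  · have ht0 : t = 0 :=
      funext fun x => (Finset.sum_eq_zero_iff_of_nonneg fun x _ => ht x).1 h x (Finset.mem_univ x)
    exact ⟨_, single_mem_stdSimplex ℝ (Classical.arbitrary X), by simp [ht0]⟩
  · refine ⟨(∑ x, t x)⁻¹ • t, ⟨fun x => ?_, ?_⟩, smul_inv_smul₀ h t⟩
    · exact mul_nonneg (inv_nonneg.2 (Finset.sum_nonneg fun x _ => ht x)) (ht x)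
    · simp only [Pi.smul_apply, smul_eq_mul, ← Finset.mul_sum]
      exact inv_mul_cancel₀ h

theorem exists_le_zero_of_forall_pos_exists_le {α : Type*} [TopologicalSpace α] {K : Set α}
    (hK : IsCompact K) {f : α → ℝ} (hf : ContinuousOn f K) (h : ∀ ε > 0, ∃ y ∈ K, f y ≤ ε) :
    ∃ y ∈ K, f y ≤ 0 := by
  obtain ⟨y₁, hy₁, -⟩ := h 1 one_pos
  obtain ⟨y, hy, hmin⟩ := hK.exists_isMinOn ⟨y₁, hy₁⟩ hf
  refine ⟨y, hy, le_of_forall_pos_le_add fun ε hε => ?_⟩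
  obtain ⟨z, hz, hzε⟩ := h ε hε
  linarith [isMinOn_iff.1 hmin z hz]

section KernelSums

variable {X G V : Type*} [AddCommGroup V]

/-- For a family of functionals `Φ g` on weights over `X`, the values `∑ u, Φ (g u) (k(u | ·))`
over all probability kernels `k` from `X` to a finite alphabet and all labellings `u ↦ g u`. -/
def kernelSums (Φ : G → (X → ℝ) → V) : Set V :=
  {y | ∃ (k : ℕ) (pu : X → Fin k → ℝ) (g : Fin k → G),
    (∀ x, IsPMF (pu x)) ∧ ∑ u, Φ (g u) (fun x => pu x u) = y}

theorem sum_mem_kernelSums (Φ : G → (X → ℝ) → V) {U : Type} [Fintype U] {pu : X → U → ℝ}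
    (hpu : ∀ x, IsPMF (pu x)) (g : U → G) :
    ∑ u, Φ (g u) (fun x => pu x u) ∈ kernelSums Φ := by
  let e := (Fintype.equivFin U).symm
  refine ⟨Fintype.card U, fun x i => pu x (e i), g ∘ e, fun x => ⟨fun i => (hpu x).1 _, ?_⟩, ?_⟩
  · exact (e.sum_comp (pu x)).trans (hpu x).2
  · exact e.sum_comp fun u => Φ (g u) fun x => pu x u

variable [Module ℝ V]

/-- Rescaling every column `k(u | ·)` of a kernel to total weight `1` exhibits the uniform weight as
a convex combination of points of the simplex. -/
theorem smul_mk_mem_convexHull_of_mem_kernelSums [Fintype X] [Nonempty X] {Φ : G → (X → ℝ) → V}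
    (hΦ : ∀ g (c : ℝ) t, Φ g (c • t) = c • Φ g t) {y : V} (hy : y ∈ kernelSums Φ) :
    (Fintype.card X : ℝ)⁻¹ • ((1 : X → ℝ), y) ∈
      convexHull ℝ (⋃ g, (fun t => (t, Φ g t)) '' stdSimplex ℝ X) := by
  obtain ⟨k, pu, g, hpu, rfl⟩ := hy
  choose t ht htpu using fun u =>
    exists_mem_stdSimplex_sum_smul_eq (t := fun x => pu x u) fun x => (hpu x).1 u
  refine mem_convexHull_of_exists_fintype (fun u => (Fintype.card X : ℝ)⁻¹ * ∑ x, pu x u)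
    (fun u => (t u, Φ (g u) (t u))) (fun u => ?_) ?_
    (fun u => Set.mem_iUnion.2 ⟨g u, t u, ht u, rfl⟩) ?_
  · exact mul_nonneg (by positivity) (Finset.sum_nonneg fun x _ => (hpu x).1 u)
  · rw [← Finset.mul_sum, Finset.sum_comm]
    simp [fun x => (hpu x).2]
  · have hcol : ∑ u, (fun x => pu x u) = (1 : X → ℝ) := by
      funext x
      simpa using (hpu x).2
    simp only [mul_smul, Prod.smul_mk, ← hΦ, htpu]
    simp only [hΦ, ← Prod.smul_mk, ← Finset.smul_sum, ← hcol]
    congr 1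
    exact Prod.ext (by simp [Prod.fst_sum]) (by simp [Prod.snd_sum])

theorem mem_kernelSums_of_smul_mk_mem_convexHull [Fintype X] [Nonempty X] {Φ : G → (X → ℝ) → V}
    (hΦ : ∀ g (c : ℝ) t, Φ g (c • t) = c • Φ g t) {y : V}
    (hy : (Fintype.card X : ℝ)⁻¹ • ((1 : X → ℝ), y) ∈
      convexHull ℝ (⋃ g, (fun t => (t, Φ g t)) '' stdSimplex ℝ X)) :
    y ∈ kernelSums Φ := by
  have hN : (Fintype.card X : ℝ) ≠ 0 := by exact_mod_cast Fintype.card_ne_zero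
  rw [mem_convexHull_iff_exists_fintype] at hy
  obtain ⟨ι, _, w, z, hw, -, hz, hsum⟩ := hy
  simp only [Set.mem_iUnion, Set.mem_image] at hz
  choose g t ht hz using hz
  obtain rfl : (fun i => (t i, Φ (g i) (t i))) = z := funext hz
  have hfst := congrArg Prod.fst hsum
  have hsnd := congrArg Prod.snd hsum
  simp only [Prod.fst_sum, Prod.snd_sum, Prod.smul_fst, Prod.smul_snd] at hfst hsnd
  have hpu (x : X) : IsPMF fun i => Fintype.card X * (w i * t i x) := by
    refine ⟨fun i => mul_nonneg (by positivity) (mul_nonneg (hw i) ((ht i).1 x)), ?_⟩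
    have hx := congrFun hfst x
    simp only [Finset.sum_apply, Pi.smul_apply, smul_eq_mul, Pi.one_apply, mul_one] at hx
    rw [← Finset.mul_sum, hx, mul_inv_cancel₀ hN]
  convert sum_mem_kernelSums Φ hpu g
  have hcol (i : ι) : (fun x => Fintype.card X * (w i * t i x)) =
      (Fintype.card X : ℝ) • w i • t i := rfl
  simp only [hcol, hΦ, ← Finset.smul_sum, hsnd, smul_inv_smul₀ hN]

theorem kernelSums_eq_image_convexHull [Fintype X] [Nonempty X] {Φ : G → (X → ℝ) → V}
    (hΦ : ∀ g (c : ℝ) t, Φ g (c • t) = c • Φ g t) :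
    kernelSums Φ = ((Fintype.card X : ℝ) • LinearMap.snd ℝ (X → ℝ) V) ''
      (convexHull ℝ (⋃ g, (fun t => (t, Φ g t)) '' stdSimplex ℝ X) ∩
        {q | q.1 = (Fintype.card X : ℝ)⁻¹ • 1}) := by
  have hN : (Fintype.card X : ℝ) ≠ 0 := by exact_mod_cast Fintype.card_ne_zero
  refine Set.Subset.antisymm (fun y hy => ?_) ?_
  · exact ⟨_, ⟨smul_mk_mem_convexHull_of_mem_kernelSums hΦ hy, rfl⟩, smul_inv_smul₀ hN y⟩
  · rintro _ ⟨⟨_, v⟩, ⟨hq, rfl⟩, rfl⟩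
    refine mem_kernelSums_of_smul_mk_mem_convexHull hΦ ?_
    simpa [smul_smul, inv_mul_cancel₀ hN] using hq

theorem convex_kernelSums [Finite X] [Nonempty X] {Φ : G → (X → ℝ) → V}
    (hΦ : ∀ g (c : ℝ) t, Φ g (c • t) = c • Φ g t) : Convex ℝ (kernelSums Φ) := by
  have := Fintype.ofFinite X
  rw [kernelSums_eq_image_convexHull hΦ]
  refine ((convex_convexHull ℝ _).inter ?_).linear_image _
  exact (convex_singleton _).linear_preimage (LinearMap.fst ℝ (X → ℝ) V)

theorem isCompact_kernelSums [Finite X] [Nonempty X] [Finite G] [TopologicalSpace V]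
    [ContinuousAdd V] [ContinuousSMul ℝ V] [FiniteDimensional ℝ V] {Φ : G → (X → ℝ) → V}
    (hΦ : ∀ g (c : ℝ) t, Φ g (c • t) = c • Φ g t) (hΦc : ∀ g, Continuous (Φ g)) :
    IsCompact (kernelSums Φ) := by
  have := Fintype.ofFinite X
  rw [kernelSums_eq_image_convexHull hΦ]
  refine IsCompact.image (IsCompact.inter_right (isCompact_convexHull ?_) ?_)
    (continuous_snd.const_smul _)
  · exact isCompact_iUnion fun g =>
      (isCompact_stdSimplex ℝ X).image (continuous_id.prodMk (hΦc g))
  · exact isClosed_eq continuous_fst continuous_const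

end KernelSums

section Entropy

variable {α β U : Type} [Fintype α] [Fintype β] [Fintype U]

theorem sum_mul_logb_le_sum_mul_logb {ι : Type*} [Fintype ι] {f g : ι → ℝ} (hf : ∀ a, 0 ≤ f a)
    (hg : ∀ a, 0 ≤ g a) (hgf : ∑ a, g a ≤ ∑ a, f a) (hfg : ∀ a, f a ≠ 0 → g a ≠ 0) :
    ∑ a, f a * Real.logb 2 (g a) ≤ ∑ a, f a * Real.logb 2 (f a) := by
  have hterm (a : ι) : f a * Real.log (g a) - f a * Real.log (f a) ≤ g a - f a := by
    rcases (hf a).eq_or_lt with h | h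
    · simp [← h, hg a]
    · have hga : 0 < g a := (hg a).lt_of_ne' (hfg a h.ne')
      calc f a * Real.log (g a) - f a * Real.log (f a) = f a * Real.log (g a / f a) := by
            rw [Real.log_div hga.ne' h.ne', mul_sub]
        _ ≤ f a * (g a / f a - 1) := by
            gcongr
            exact Real.log_le_sub_one_of_pos (div_pos hga h)
        _ = g a - f a := by field_simp
  have hlog : ∑ a, f a * Real.log (g a) ≤ ∑ a, f a * Real.log (f a) := by
    have := Finset.sum_le_sum fun a (_ : a ∈ Finset.univ) => hterm a
    simp only [Finset.sum_sub_distrib] at this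
    linarith
  simp only [Real.logb, ← mul_div_assoc, ← Finset.sum_div]
  gcongr

theorem continuous_H2 : Continuous (H2 : (α → ℝ) → ℝ) := by
  have : Continuous fun y : ℝ => y * Real.logb 2 y := by
    simp only [Real.logb, ← mul_div_assoc]
    exact Real.continuous_mul_log.div_const _
  exact (continuous_finsetSum _ fun a _ => this.comp (continuous_apply a)).neg

theorem continuous_condH2 : Continuous (condH2 : (α × β → ℝ) → ℝ) :=
  continuous_H2.sub (continuous_H2.comp (by fun_prop))

theorem H2_const_mul (c : ℝ) (f : α → ℝ) :
    H2 (fun a => c * f a) = c * H2 f - c * Real.logb 2 c * ∑ a, f a := by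
  have hterm (y : ℝ) : c * y * Real.logb 2 (c * y) =
      c * (y * Real.logb 2 y) + c * Real.logb 2 c * y := by
    rcases eq_or_ne c 0 with rfl | hc
    · simp
    rcases eq_or_ne y 0 with rfl | hy
    · simp
    rw [Real.logb_mul hc hy]
    ring
  simp only [H2, hterm, Finset.sum_add_distrib, ← Finset.mul_sum]
  ring

theorem condH2_const_mul (c : ℝ) (p : α × β → ℝ) :
    condH2 (fun q => c * p q) = c * condH2 p := by
  simp only [condH2, ← Finset.mul_sum, H2_const_mul, Fintype.sum_prod_type_right]
  ring

theorem condH2_eq_sum_condH2 (p : α × (U × β) → ℝ) :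
    condH2 p = ∑ u, condH2 fun q : α × β => p (q.1, (u, q.2)) := by
  have hjoint : H2 p = ∑ u, H2 fun q : α × β => p (q.1, (u, q.2)) := by
    simp only [H2, Finset.sum_neg_distrib, Fintype.sum_prod_type (α₁ := α)]
    rw [Finset.sum_comm]
    simp only [Fintype.sum_prod_type]
    exact congrArg _ (Finset.sum_congr rfl fun u _ => Finset.sum_comm)
  rw [condH2, hjoint]
  simp only [condH2, H2, Finset.sum_sub_distrib, Finset.sum_neg_distrib, Fintype.sum_prod_type]

theorem H2_mul_kernel (f : α → ℝ) {k : α → U → ℝ} (hk : ∀ a, IsPMF (k a)) :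
    H2 (fun q : α × U => f q.1 * k q.1 q.2) = H2 f + ∑ a, f a * H2 (k a) := by
  have hterm (a : α) : H2 (fun u => f a * k a u) = f a * H2 (k a) - f a * Real.logb 2 (f a) := by
    rw [H2_const_mul, (hk a).2, mul_one]
  have hsum : H2 (fun q : α × U => f q.1 * k q.1 q.2) = ∑ a, H2 fun u => f a * k a u := by
    simp only [H2, Fintype.sum_prod_type, Finset.sum_neg_distrib]
  rw [hsum]
  simp only [hterm, Finset.sum_sub_distrib]
  simp only [H2]
  ring

theorem condH2_le_neg_sum_mul_logb {p k : α × β → ℝ} (hp : ∀ q, 0 ≤ p q) (hk : ∀ q, 0 ≤ k q)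
    (hk1 : ∀ b, ∑ a, k (a, b) ≤ 1) (hpk : ∀ q, p q ≠ 0 → k q ≠ 0) :
    condH2 p ≤ -∑ q, p q * Real.logb 2 (k q) := by
  set m : β → ℝ := fun b => ∑ a, p (a, b) with hm
  have hm0 (b : β) : 0 ≤ m b := Finset.sum_nonneg fun a _ => hp _
  have hpm (q : α × β) (hq : p q ≠ 0) : m q.2 ≠ 0 := fun h =>
    hq ((Finset.sum_eq_zero_iff_of_nonneg fun a _ => hp (a, q.2)).1 h q.1 (Finset.mem_univ _))
  have hgibbs : ∑ q, p q * Real.logb 2 (k q * m q.2) ≤ ∑ q, p q * Real.logb 2 (p q) := by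
    refine sum_mul_logb_le_sum_mul_logb hp (fun q => mul_nonneg (hk q) (hm0 _)) ?_
      fun q hq => mul_ne_zero (hpk q hq) (hpm q hq)
    simp only [Fintype.sum_prod_type_right, ← Finset.sum_mul]
    exact Finset.sum_le_sum fun b _ => mul_le_of_le_one_left (hm0 b) (hk1 b)
  have hsplit (q : α × β) : p q * Real.logb 2 (k q * m q.2) =
      p q * Real.logb 2 (k q) + p q * Real.logb 2 (m q.2) := by
    rcases eq_or_ne (p q) 0 with h | h
    · simp [h]
    · rw [Real.logb_mul (hpk q h) (hpm q h), mul_add]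
  have hmarg : ∑ q, p q * Real.logb 2 (m q.2) = ∑ b, m b * Real.logb 2 (m b) := by
    simp only [Fintype.sum_prod_type_right, ← Finset.sum_mul, hm]
  simp only [hsplit, Finset.sum_add_distrib, hmarg] at hgibbs
  simp only [condH2, H2]
  linarith

theorem condH2_le_logb_card {p : α × β → ℝ} (hp : IsPMF p) :
    condH2 p ≤ Real.logb 2 (Fintype.card α) := by
  calc condH2 p ≤ -∑ q, p q * Real.logb 2 (Fintype.card α : ℝ)⁻¹ := by
        refine condH2_le_neg_sum_mul_logb hp.1 (fun _ => by positivity) (fun b => ?_) fun q _ => ?_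
        · simpa using mul_inv_le_one
        · have : Nonempty α := ⟨q.1⟩
          simp
    _ = Real.logb 2 (Fintype.card α) := by
        rw [← Finset.sum_mul, hp.2, one_mul, Real.logb_inv, neg_neg]

end Entropy

section Law

variable {Ω α β γ κ : Type} [Fintype Ω]

open Classical in
/-- The push-forward of the weight `P` on the sample space `Ω` along `X`: the law of the random
variable `X`. -/
noncomputable def law (P : Ω → ℝ) (X : Ω → α) (a : α) : ℝ :=
  ∑ ω with X ω = a, P ω

theorem sum_law_mul [Fintype α] (P : Ω → ℝ) (X : Ω → α) (φ : α → ℝ) :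
    ∑ a, law P X a * φ a = ∑ ω, P ω * φ (X ω) := by
  classical
  rw [← Finset.sum_fiberwise _ X]
  refine Finset.sum_congr rfl fun a _ => ?_
  rw [law, Finset.sum_mul]
  exact Finset.sum_congr (by congr) fun ω hω => by rw [(Finset.mem_filter.1 hω).2]

theorem sum_law [Fintype α] (P : Ω → ℝ) (X : Ω → α) : ∑ a, law P X a = ∑ ω, P ω := by
  simpa using sum_law_mul P X 1

theorem law_nonneg {P : Ω → ℝ} (hP : ∀ ω, 0 ≤ P ω) (X : Ω → α) (a : α) : 0 ≤ law P X a :=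
  Finset.sum_nonneg fun ω _ => hP ω

theorem isPMF_law [Fintype α] {P : Ω → ℝ} (hP : IsPMF P) (X : Ω → α) : IsPMF (law P X) :=
  ⟨law_nonneg hP.1 X, (sum_law P X).trans hP.2⟩

theorem law_const_mul (c : ℝ) (P : Ω → ℝ) (X : Ω → α) :
    law (fun ω => c * P ω) X = fun a => c * law P X a :=
  funext fun _ => (Finset.mul_sum _ _ _).symm

theorem law_apply_ne_zero {P : Ω → ℝ} (hP : ∀ ω, 0 ≤ P ω) (X : Ω → α) {ω : Ω} (hω : P ω ≠ 0) :
    law P X (X ω) ≠ 0 := by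
  classical
  have : P ω ≤ law P X (X ω) :=
    Finset.single_le_sum (fun ω' _ => hP ω') (Finset.mem_filter.2 ⟨Finset.mem_univ ω, rfl⟩)
  exact (((hP ω).lt_of_ne' hω).trans_le this).ne'

theorem exists_of_law_ne_zero {P : Ω → ℝ} {X : Ω → α} {a : α} (ha : law P X a ≠ 0) :
    ∃ ω, P ω ≠ 0 ∧ X ω = a := by
  classical
  obtain ⟨ω, hω, hPω⟩ := Finset.exists_ne_zero_of_sum_ne_zero ha
  exact ⟨ω, hPω, (Finset.mem_filter.1 hω).2⟩

theorem law_law [Fintype α] (P : Ω → ℝ) (X : Ω → α) (f : α → β) :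
    law (law P X) f = law P fun ω => f (X ω) := by
  classical
  funext b
  simpa [law, Finset.sum_filter] using sum_law_mul P X fun a => if f a = b then 1 else 0

theorem law_apply_of_injective (P : Ω → ℝ) {e : Ω → α} (he : Function.Injective e) (ω : Ω) :
    law P e (e ω) = P ω := by
  classical
  simp [law, Finset.sum_filter, he.eq_iff]

theorem law_mul_kernel_prodMk [Fintype α] [Fintype β] (p : α → ℝ) (k : α → β → ℝ) (V : α → β → γ)
    (q : α × γ) :
    law (fun x : α × β => p x.1 * k x.1 x.2) (fun x => (x.1, V x.1 x.2)) q =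
      p q.1 * law (k q.1) (V q.1) q.2 := by
  classical
  simp only [law, Finset.sum_filter, Fintype.sum_prod_type, Prod.ext_iff, ite_and,
    Finset.mul_sum, mul_ite, mul_zero]
  rw [Fintype.sum_eq_single q.1 fun a ha => by simp [ha]]
  simp

theorem sum_law_prodMk_left [Fintype α] (P : Ω → ℝ) (X : Ω → α) (Y : Ω → β) (b : β) :
    ∑ a, law P (fun ω => (X ω, Y ω)) (a, b) = law P Y b := by
  classical
  simp only [law, Finset.sum_filter, Prod.mk.injEq, ite_and]
  rw [Finset.sum_comm]
  simp

theorem sum_law_prodMk_right [Fintype β] (P : Ω → ℝ) (X : Ω → α) (Y : Ω → β) (a : α) :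
    ∑ b, law P (fun ω => (X ω, Y ω)) (a, b) = law P X a := by
  classical
  simp only [law, Finset.sum_filter, Prod.mk.injEq, and_comm (a := X _ = a), ite_and]
  rw [Finset.sum_comm]
  simp

theorem H2_law [Fintype α] (P : Ω → ℝ) (X : Ω → α) :
    H2 (law P X) = -∑ ω, P ω * Real.logb 2 (law P X (X ω)) := by
  rw [H2, sum_law_mul P X fun a => Real.logb 2 (law P X a)]

theorem H2_law_of_injective [Fintype α] (P : Ω → ℝ) {e : Ω → α} (he : Function.Injective e) :
    H2 (law P e) = H2 P := by
  rw [H2_law]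
  simp only [law_apply_of_injective P he, H2]

/-- The conditional entropy `H(X | Y)` of random variables on the sample space `Ω` with weight
`P`. -/
noncomputable def condEntropy [Fintype α] [Fintype β] (P : Ω → ℝ) (X : Ω → α) (Y : Ω → β) : ℝ :=
  condH2 (law P fun ω => (X ω, Y ω))

theorem condEntropy_eq_sub [Fintype α] [Fintype β] (P : Ω → ℝ) (X : Ω → α) (Y : Ω → β) :
    condEntropy P X Y = H2 (law P fun ω => (X ω, Y ω)) - H2 (law P Y) := by
  simp only [condEntropy, condH2, sum_law_prodMk_left]

theorem MI2_law [Fintype α] [Fintype β] (P : Ω → ℝ) (X : Ω → α) (Y : Ω → β) :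
    MI2 (law P fun ω => (X ω, Y ω)) =
      H2 (law P X) + H2 (law P Y) - H2 (law P fun ω => (X ω, Y ω)) := by
  simp only [MI2, sum_law_prodMk_left, sum_law_prodMk_right]

theorem condEntropy_law [Fintype α] [Fintype β] [Fintype γ] (P : Ω → ℝ) (T : Ω → γ) (X : γ → α)
    (Y : γ → β) :
    condEntropy (law P T) X Y = condEntropy P (fun ω => X (T ω)) fun ω => Y (T ω) := by
  rw [condEntropy, law_law, condEntropy]

theorem condEntropy_const_mul [Fintype α] [Fintype β] (c : ℝ) (P : Ω → ℝ) (X : Ω → α)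
    (Y : Ω → β) : condEntropy (fun ω => c * P ω) X Y = c * condEntropy P X Y := by
  rw [condEntropy, law_const_mul, condH2_const_mul, condEntropy]

theorem continuous_condEntropy [Fintype α] [Fintype β] (X : Ω → α) (Y : Ω → β) :
    Continuous fun P : Ω → ℝ => condEntropy P X Y :=
  continuous_condH2.comp <| continuous_pi fun _ =>
    continuous_finsetSum _ fun ω _ => continuous_apply ω

theorem condEntropy_comp_injective [Fintype α] [Fintype β] [Fintype γ] (P : Ω → ℝ) (X : Ω → α)
    (Y : Ω → β) {e : β → γ} (he : Function.Injective e) :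
    condEntropy P X (fun ω => e (Y ω)) = condEntropy P X Y := by
  have hY : H2 (law P fun ω => e (Y ω)) = H2 (law P Y) := by
    rw [← law_law, H2_law_of_injective _ he]
  have hXY : H2 (law P fun ω => (X ω, e (Y ω))) = H2 (law P fun ω => (X ω, Y ω)) := by
    rw [← H2_law_of_injective _ (Function.injective_id.prodMap he), law_law]
    rfl
  rw [condEntropy_eq_sub, condEntropy_eq_sub, hY, hXY]

theorem condEntropy_eq_neg_sum [Fintype α] [Fintype β] {P : Ω → ℝ} (hP : ∀ ω, 0 ≤ P ω)
    (X : Ω → α) (Y : Ω → β) :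
    condEntropy P X Y = -∑ ω, P ω *
      Real.logb 2 (law P (fun ω => (X ω, Y ω)) (X ω, Y ω) / law P Y (Y ω)) := by
  rw [condEntropy_eq_sub, H2_law, H2_law, neg_sub_neg, ← neg_sub, ← Finset.sum_sub_distrib]
  refine congrArg _ (Finset.sum_congr rfl fun ω _ => ?_)
  rcases eq_or_ne (P ω) 0 with h | h
  · simp [h]
  · rw [← mul_sub, Real.logb_div (law_apply_ne_zero hP (fun ω => (X ω, Y ω)) h)
      (law_apply_ne_zero hP Y h)]

theorem condEntropy_pi_le_sum {ι : Type} [Fintype ι] [DecidableEq ι] [Fintype α] [Fintype β]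
    {P : Ω → ℝ} (hP : ∀ ω, 0 ≤ P ω) (X : ι → Ω → α) (Y : Ω → β) :
    condEntropy P (fun ω i => X i ω) Y ≤ ∑ i, condEntropy P (X i) Y := by
  let c (i : ι) (q : α × β) : ℝ := law P (fun ω => (X i ω, Y ω)) q / law P Y q.2
  have hc (i : ι) (q : α × β) : 0 ≤ c i q := div_nonneg (law_nonneg hP _ _) (law_nonneg hP _ _)
  have hc_ne {ω : Ω} (hω : P ω ≠ 0) (i : ι) : c i (X i ω, Y ω) ≠ 0 :=
    div_ne_zero (law_apply_ne_zero hP (fun ω => (X i ω, Y ω)) hω) (law_apply_ne_zero hP Y hω)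
  let k (q : (ι → α) × β) : ℝ := ∏ i, c i (q.1 i, q.2)
  have hk1 (b : β) : ∑ x, k (x, b) ≤ 1 := by
    simp only [k, c, ← Fintype.prod_sum fun i a => law P (fun ω => (X i ω, Y ω)) (a, b) / law P Y b,
      ← Finset.sum_div, sum_law_prodMk_left]
    exact Finset.prod_le_one (fun i _ => div_nonneg (law_nonneg hP _ _) (law_nonneg hP _ _))
      fun i _ => div_self_le_one _
  have hsupp (q : (ι → α) × β) (hq : law P (fun ω => ((fun i => X i ω), Y ω)) q ≠ 0) :
      k q ≠ 0 := by
    obtain ⟨ω, hPω, rfl⟩ := exists_of_law_ne_zero hq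
    exact Finset.prod_ne_zero_iff.2 fun i _ => hc_ne hPω i
  have hlog (ω : Ω) : P ω * Real.logb 2 (k ((fun i => X i ω), Y ω)) =
      ∑ i, P ω * Real.logb 2 (c i (X i ω, Y ω)) := by
    rcases eq_or_ne (P ω) 0 with h | h
    · simp [h]
    · rw [Real.logb_prod _ _ fun i _ => hc_ne h i, Finset.mul_sum]
  calc condEntropy P (fun ω i => X i ω) Y
      ≤ -∑ q, law P (fun ω => ((fun i => X i ω), Y ω)) q * Real.logb 2 (k q) :=
        condH2_le_neg_sum_mul_logb (law_nonneg hP _) (fun q => Finset.prod_nonneg fun i _ => hc i _)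
          hk1 hsupp
    _ = ∑ i, -∑ ω, P ω * Real.logb 2 (c i (X i ω, Y ω)) := by
        rw [sum_law_mul P _ fun q => Real.logb 2 (k q)]
        simp only [hlog]
        rw [Finset.sum_comm, Finset.sum_neg_distrib]
    _ = ∑ i, condEntropy P (X i) Y := by
        simp only [condEntropy_eq_neg_sum hP, c]

theorem condEntropy_sub_logb_card_le [Fintype α] [Fintype β] [Fintype κ] {P : Ω → ℝ}
    (hP : IsPMF P) (X : Ω → α) (Y : Ω → β) (f : α → κ) :
    condEntropy P X Y - Real.logb 2 (Fintype.card κ) ≤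
      condEntropy P X fun ω => (f (X ω), Y ω) := by
  have hinj : Function.Injective fun q : α × β => (q.1, (f q.1, q.2)) := by
    rintro ⟨a, b⟩ ⟨a', b'⟩ h
    simp only [Prod.mk.injEq] at h
    rw [h.1, h.2.2]
  have hjoint : H2 (law P fun ω => (X ω, (f (X ω), Y ω))) = H2 (law P fun ω => (X ω, Y ω)) := by
    rw [← H2_law_of_injective _ hinj, law_law]
  have hcard : condEntropy P (fun ω => f (X ω)) Y ≤ Real.logb 2 (Fintype.card κ) :=
    condH2_le_logb_card (isPMF_law hP _)
  rw [condEntropy_eq_sub] at hcard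
  rw [condEntropy_eq_sub, condEntropy_eq_sub, hjoint]
  linarith

end Law

section Iid

variable {ι α β : Type} [Fintype ι]

/-- The law `p^ι` of an i.i.d. family of letters indexed by `ι`, each distributed according to
`p`. -/
noncomputable def iidLaw (p : α → ℝ) (s : ι → α) : ℝ :=
  ∏ i, p (s i)

variable [DecidableEq ι] [Fintype α]

theorem isPMF_iidLaw {p : α → ℝ} (hp : IsPMF p) : IsPMF (iidLaw p : (ι → α) → ℝ) := by
  refine ⟨fun s => Finset.prod_nonneg fun i _ => hp.1 _, ?_⟩
  simp only [iidLaw, ← Fintype.prod_sum fun _ : ι => p, hp.2, Finset.prod_const_one]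

theorem law_iidLaw_comp (p : α → ℝ) (φ : α → β) :
    law (iidLaw p) (fun (s : ι → α) i => φ (s i)) = iidLaw (law p φ) := by
  classical
  funext t
  simp only [law, iidLaw, Finset.sum_filter, Fintype.prod_sum, Finset.prod_ite_zero, funext_iff,
    Finset.mem_univ, true_imp_iff]

theorem law_iidLaw_funSplitAt (p : α → ℝ) (i : ι) :
    law (iidLaw p) (Equiv.funSplitAt i α) = fun q => p q.1 * iidLaw p q.2 := by
  funext q
  obtain ⟨s, rfl⟩ := (Equiv.funSplitAt i α).surjective q
  rw [law_apply_of_injective _ (Equiv.injective _), iidLaw,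
    Fintype.prod_eq_mul_prod_subtype_ne _ i]
  rfl

theorem law_iidLaw_prodMk {γ : Type} (p : α → ℝ) (i : ι) (V : α → ({j // j ≠ i} → α) → γ) :
    law (iidLaw p) (fun s => (s i, V (s i) fun j => s j)) =
      fun q => p q.1 * law (iidLaw p) (V q.1) q.2 := by
  funext q
  rw [← law_mul_kernel_prodMk p (fun _ => iidLaw p) V q, ← law_iidLaw_funSplitAt, law_law]
  rfl

theorem law_iidLaw_apply {p : α → ℝ} (hp : IsPMF p) (i : ι) :
    law (iidLaw p) (fun s : ι → α => s i) = p := by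
  funext a
  rw [← sum_law_prodMk_right _ _ (fun s (j : {j // j ≠ i}) => s j),
    law_iidLaw_prodMk p i fun _ r => r]
  simp only [← Finset.mul_sum, sum_law, (isPMF_iidLaw hp).2, mul_one]

theorem H2_iidLaw {p : α → ℝ} (hp : IsPMF p) :
    H2 (iidLaw p : (ι → α) → ℝ) = Fintype.card ι * H2 p := by
  have hterm (s : ι → α) : iidLaw p s * Real.logb 2 (iidLaw p s) =
      ∑ i, iidLaw p s * Real.logb 2 (p (s i)) := by
    rcases eq_or_ne (iidLaw p s) 0 with h | h
    · simp [h]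
    · rw [← Finset.mul_sum, ← Real.logb_prod _ _ fun i _ => Finset.prod_ne_zero_iff.1 h i
        (Finset.mem_univ i), iidLaw]
  have hletter (i : ι) : ∑ s, iidLaw p s * Real.logb 2 (p (s i)) = -H2 p := by
    rw [← sum_law_mul (iidLaw p) (fun s : ι → α => s i) fun a => Real.logb 2 (p a),
      law_iidLaw_apply hp, H2, neg_neg]
  rw [H2]
  simp only [hterm]
  rw [Finset.sum_comm]
  simp [hletter]

theorem condEntropy_iidLaw {γ : Type} [Fintype β] [Fintype γ] {p : α → ℝ} (hp : IsPMF p)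
    (X : α → β) (Y : α → γ) :
    condEntropy (iidLaw p) (fun (s : ι → α) i => X (s i)) (fun s i => Y (s i)) =
      Fintype.card ι * condEntropy p X Y := by
  have hpair : H2 (law (iidLaw p) fun s : ι → α => (fun i => X (s i), fun i => Y (s i))) =
      H2 (law (iidLaw p) fun (s : ι → α) i => (X (s i), Y (s i))) := by
    rw [← H2_law_of_injective _ (Equiv.arrowProdEquivProdArrow ι (fun _ => β) fun _ => γ).injective,
      law_law]
    rfl
  rw [condEntropy_eq_sub, condEntropy_eq_sub, hpair, law_iidLaw_comp p Y,
    law_iidLaw_comp p fun a => (X a, Y a), H2_iidLaw (isPMF_law hp _), H2_iidLaw (isPMF_law hp _)]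
  ring

end Iid

section SingleLetter

variable {Xr Xh Z Xhat U γ : Type} [Fintype Xr] [Fintype Xh] [Fintype Z]

/-- The source with each letter `(x_r, x_h, z)` reweighted by `t (x_r, x_h)`; for
`t = p(u | ·)` it is the slice at `u` of the joint law of source and auxiliary variable. -/
def reweight (p : Xr × Xh × Z → ℝ) (t : Xr × Xh → ℝ) (x : Xr × Xh × Z) : ℝ :=
  p x * t (x.1, x.2.1)

/-- The joint law `p(x_r, x_h, z) p(u | x_r, x_h)` of source and auxiliary variable. -/
def jointLaw (p : Xr × Xh × Z → ℝ) (pu : Xr × Xh → U → ℝ) (q : (Xr × Xh × Z) × U) : ℝ :=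
  reweight p (fun x => pu x q.2) q.1

/-- The conditional entropy `H(X_r, X_h | Z)` of the source given the side information. -/
noncomputable def inputEntropy (p : Xr × Xh × Z → ℝ) : ℝ :=
  condEntropy p (fun x => (x.1, x.2.1)) fun x => x.2.2

/-- The conditional entropy `H(X_r, X_h | U, Z)` of the source given the auxiliary variable and the
side information; the rate is `inputEntropy p - inputEquivocation p pu`. -/
noncomputable def inputEquivocation [Fintype U] (p : Xr × Xh × Z → ℝ) (pu : Xr × Xh → U → ℝ) : ℝ :=
  condEntropy (jointLaw p pu) (fun q => (q.1.1, q.1.2.1)) fun q => (q.2, q.1.2.2)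

theorem law_input (p : Xr × Xh × Z → ℝ) :
    law p (fun x => (x.1, x.2.1)) = fun y => ∑ z, p (y.1, y.2, z) := by
  classical
  funext y
  rw [law, Finset.sum_filter, ← (Equiv.prodAssoc Xr Xh Z).sum_comp, Fintype.sum_prod_type,
    Fintype.sum_eq_single y fun x hx => by simp [hx]]
  simp

variable [Fintype U]

theorem law_jointLaw_prodMk (p : Xr × Xh × Z → ℝ) (pu : Xr × Xh → U → ℝ) (A : Xr × Xh × Z → γ)
    (q : γ × U) :
    law (jointLaw p pu) (fun q => (A q.1, q.2)) q = law (reweight p fun x => pu x q.2) A q.1 := by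
  classical
  simp only [law, Finset.sum_filter, Fintype.sum_prod_type_right (α₁ := Xr × Xh × Z), Prod.ext_iff]
  rw [Fintype.sum_eq_single q.2 fun u hu => by simp [hu]]
  simp [jointLaw]

theorem law_jointLaw_fst (p : Xr × Xh × Z → ℝ) {pu : Xr × Xh → U → ℝ}
    (hpu : ∀ x, IsPMF (pu x)) : law (jointLaw p pu) Prod.fst = p := by
  funext x
  rw [← sum_law_prodMk_right _ _ (Prod.snd : (Xr × Xh × Z) × U → U)]
  calc ∑ u, law (jointLaw p pu) (fun q => (q.1, q.2)) (x, u) = ∑ u, jointLaw p pu (x, u) :=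
        Finset.sum_congr rfl fun u _ => law_apply_of_injective _ Function.injective_id (x, u)
    _ = p x := by
        simp only [jointLaw, reweight, ← Finset.mul_sum, (hpu _).2, mul_one]

theorem law_jointLaw_input_prodMk (p : Xr × Xh × Z → ℝ) (pu : Xr × Xh → U → ℝ) :
    law (jointLaw p pu) (fun q => ((q.1.1, q.1.2.1), q.2)) =
      fun q => law p (fun x => (x.1, x.2.1)) q.1 * pu q.1 q.2 := by
  funext q
  rw [law_jointLaw_prodMk p pu fun x => (x.1, x.2.1), law_input, law_input, Finset.sum_mul]
  rfl

theorem law_jointLaw_sideInfo_prodMk (p : Xr × Xh × Z → ℝ) (pu : Xr × Xh → U → ℝ) :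
    law (jointLaw p pu) (fun q => (q.1.2.2, q.2)) =
      fun q => ∑ xr, ∑ xh, p (xr, xh, q.1) * pu (xr, xh) q.2 := by
  classical
  funext q
  rw [law_jointLaw_prodMk p pu fun x => x.2.2]
  simp [law, Finset.sum_filter, Fintype.sum_prod_type, reweight]

theorem H2_jointLaw (p : Xr × Xh × Z → ℝ) {pu : Xr × Xh → U → ℝ} (hpu : ∀ x, IsPMF (pu x)) :
    H2 (jointLaw p pu) = H2 p + ∑ x, p x * H2 (pu (x.1, x.2.1)) :=
  H2_mul_kernel p fun x => hpu (x.1, x.2.1)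

theorem slRate_eq_inputEntropy_sub (p : Xr × Xh × Z → ℝ) {pu : Xr × Xh → U → ℝ}
    (hpu : ∀ x, IsPMF (pu x)) :
    slRate p pu = inputEntropy p - inputEquivocation p pu := by
  set J := jointLaw p pu with hJ
  have hinput : law J (fun q => (q.1.1, q.1.2.1)) = law p fun x => (x.1, x.2.1) := by
    rw [← law_law J Prod.fst fun x : Xr × Xh × Z => (x.1, x.2.1), law_jointLaw_fst p hpu]
  have hside : law J (fun q => q.1.2.2) = law p fun x => x.2.2 := by
    rw [← law_law J Prod.fst fun x : Xr × Xh × Z => x.2.2, law_jointLaw_fst p hpu]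
  have hinput_aux : H2 (law J fun q => ((q.1.1, q.1.2.1), q.2)) =
      H2 (law p fun x => (x.1, x.2.1)) + ∑ x, p x * H2 (pu (x.1, x.2.1)) := by
    rw [law_jointLaw_input_prodMk, H2_mul_kernel _ hpu, sum_law_mul p _ fun y => H2 (pu y)]
  have hall : H2 (law J fun q => ((q.1.1, q.1.2.1), (q.2, q.1.2.2))) = H2 J := by
    refine H2_law_of_injective J ?_
    rintro ⟨⟨_, _, _⟩, _⟩ ⟨⟨_, _, _⟩, _⟩ h
    simp_all
  have hsource : H2 (law p fun x => ((x.1, x.2.1), x.2.2)) = H2 p :=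
    H2_law_of_injective p (Equiv.prodAssoc Xr Xh Z).symm.injective
  have hside_aux : H2 (law J fun q => (q.2, q.1.2.2)) = H2 (law J fun q => (q.1.2.2, q.2)) := by
    rw [← H2_law_of_injective _ Prod.swap_injective, law_law]
    rfl
  have hrate : slRate p pu = MI2 (law J fun q => ((q.1.1, q.1.2.1), q.2)) -
      MI2 (law J fun q => (q.1.2.2, q.2)) := by
    rw [slRate, law_jointLaw_input_prodMk, law_input, law_jointLaw_sideInfo_prodMk]
  rw [hrate, MI2_law, MI2_law, inputEntropy, inputEquivocation, condEntropy_eq_sub,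
    condEntropy_eq_sub, hinput, hside, hinput_aux, hall, hJ, H2_jointLaw p hpu, hsource, hside_aux]
  ring

theorem slDistortion_eq [Fintype Xhat] (p : Xr × Xh × Z → ℝ) (d : Xr × Xhat → ℝ)
    (pu : Xr × Xh → U → ℝ) (g : U × Z → Xhat) :
    slDistortion p d pu g = ∑ q, jointLaw p pu q * d (q.1.1, g (q.2, q.1.2.2)) := by
  rw [Fintype.sum_prod_type]
  rfl

theorem slEquivocation_eq (p : Xr × Xh × Z → ℝ) (pu : Xr × Xh → U → ℝ) :
    slEquivocation p pu =
      condEntropy (jointLaw p pu) (fun q => q.1.2.1) fun q => (q.2, q.1.2.2) := by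
  rw [slEquivocation, condEntropy]
  congr 1
  funext ⟨xh, u, z⟩
  rw [← sum_law_prodMk_left _ (fun q => q.1.1)]
  refine Finset.sum_congr rfl fun xr _ => ?_
  have hinj : Function.Injective
      fun q : (Xr × Xh × Z) × U => (q.1.1, (q.1.2.1, (q.2, q.1.2.2))) := by
    rintro ⟨⟨_, _, _⟩, _⟩ ⟨⟨_, _, _⟩, _⟩ h
    simp_all
  exact (law_apply_of_injective (jointLaw p pu) hinj ((xr, xh, z), u)).symm

theorem condEntropy_jointLaw_eq_sum [Fintype γ] (p : Xr × Xh × Z → ℝ) (pu : Xr × Xh → U → ℝ)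
    (A : Xr × Xh × Z → γ) :
    condEntropy (jointLaw p pu) (fun q => A q.1) (fun q => (q.2, q.1.2.2)) =
      ∑ u, condEntropy (reweight p fun x => pu x u) A fun x => x.2.2 := by
  have hinj : Function.Injective fun q : (γ × Z) × U => (q.1.1, (q.2, q.1.2)) := by
    rintro ⟨⟨_, _⟩, _⟩ ⟨⟨_, _⟩, _⟩ h
    simp_all
  rw [condEntropy, condH2_eq_sum_condH2]
  refine Finset.sum_congr rfl fun u _ => congrArg condH2 (funext fun q => ?_)
  rw [← law_jointLaw_prodMk p pu (fun x => (A x, x.2.2)) (q, u),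
    ← law_apply_of_injective (law _ _) hinj, law_law]

end SingleLetter

section AttainableRegion

variable {Xr Xh Z Xhat : Type} [Fintype Xr] [Fintype Xh] [Fintype Z]

/-- The distortion `E[d(X_r, g(U, Z))]`, the equivocation `H(X_h | U, Z)` and the conditional
entropy `H(X_r, X_h | U, Z)` of a single-letter choice. The last one encodes
the rate by `slRate_eq_inputEntropy_sub`. -/
noncomputable def slTriple {U : Type} [Fintype U] [Fintype Xhat] (p : Xr × Xh × Z → ℝ)
    (d : Xr × Xhat → ℝ) (pu : Xr × Xh → U → ℝ) (g : U × Z → Xhat) : ℝ × ℝ × ℝ :=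
  (slDistortion p d pu g, slEquivocation p pu, inputEquivocation p pu)

/-- The contribution of a single value `u` of the auxiliary variable to `slTriple`, as a function
of the reconstruction rule `g = g(u, ·)` and the weight `t = p(u | ·)`. -/
noncomputable def letterTriple (p : Xr × Xh × Z → ℝ) (d : Xr × Xhat → ℝ) (g : Z → Xhat)
    (t : Xr × Xh → ℝ) : ℝ × ℝ × ℝ :=
  (∑ x, reweight p t x * d (x.1, g x.2.2),
    condEntropy (reweight p t) (fun x => x.2.1) fun x => x.2.2,
    condEntropy (reweight p t) (fun x => (x.1, x.2.1)) fun x => x.2.2)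

/-- The set of all values of `slTriple` over all finite auxiliary alphabets. -/
def attainableRegion [Fintype Xhat] (p : Xr × Xh × Z → ℝ) (d : Xr × Xhat → ℝ) : Set (ℝ × ℝ × ℝ) :=
  {y | ∃ (k : ℕ) (pu : Xr × Xh → Fin k → ℝ) (g : Fin k × Z → Xhat),
    (∀ x, IsPMF (pu x)) ∧ slTriple p d pu g = y}

theorem letterTriple_smul (p : Xr × Xh × Z → ℝ) (d : Xr × Xhat → ℝ) (g : Z → Xhat) (c : ℝ)
    (t : Xr × Xh → ℝ) : letterTriple p d g (c • t) = c • letterTriple p d g t := by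
  have hc : reweight p (c • t) = fun x => c * reweight p t x := by
    funext x
    simp only [reweight, Pi.smul_apply, smul_eq_mul]
    ring
  simp only [letterTriple, hc, condEntropy_const_mul, Prod.smul_mk, smul_eq_mul, Finset.mul_sum,
    mul_assoc]

theorem continuous_letterTriple (p : Xr × Xh × Z → ℝ) (d : Xr × Xhat → ℝ) (g : Z → Xhat) :
    Continuous (letterTriple p d g) := by
  have hp : Continuous (reweight p) := by
    unfold reweight
    fun_prop
  refine Continuous.prodMk ?_ (((continuous_condEntropy _ _).comp hp).prodMk
    ((continuous_condEntropy _ _).comp hp))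
  unfold reweight
  fun_prop

variable [Fintype Xhat]

theorem sum_letterTriple {U : Type} [Fintype U] (p : Xr × Xh × Z → ℝ) (d : Xr × Xhat → ℝ)
    (pu : Xr × Xh → U → ℝ) (g : U × Z → Xhat) :
    ∑ u, letterTriple p d (fun z => g (u, z)) (fun x => pu x u) = slTriple p d pu g := by
  refine Prod.ext ?_ (Prod.ext ?_ ?_)
  · simp only [Prod.fst_sum, letterTriple, slTriple, slDistortion_eq]
    exact (Fintype.sum_prod_type_right fun q => jointLaw p pu q * d (q.1.1, g (q.2, q.1.2.2))).symm
  · simp only [Prod.fst_sum, Prod.snd_sum, letterTriple, slTriple, slEquivocation_eq]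
    exact (condEntropy_jointLaw_eq_sum p pu fun x => x.2.1).symm
  · simp only [Prod.snd_sum, letterTriple, slTriple]
    exact (condEntropy_jointLaw_eq_sum p pu fun x => (x.1, x.2.1)).symm

theorem attainableRegion_eq_kernelSums (p : Xr × Xh × Z → ℝ) (d : Xr × Xhat → ℝ) :
    attainableRegion p d = kernelSums (letterTriple p d) := by
  ext y
  constructor
  · rintro ⟨k, pu, g, hpu, rfl⟩
    exact ⟨k, pu, fun u z => g (u, z), hpu, sum_letterTriple p d pu g⟩
  · rintro ⟨k, pu, g, hpu, rfl⟩
    exact ⟨k, pu, fun q => g q.1 q.2, hpu, (sum_letterTriple p d pu _).symm⟩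

theorem slTriple_mem_attainableRegion {U : Type} [Fintype U] (p : Xr × Xh × Z → ℝ)
    (d : Xr × Xhat → ℝ) {pu : Xr × Xh → U → ℝ} (hpu : ∀ x, IsPMF (pu x)) (g : U × Z → Xhat) :
    slTriple p d pu g ∈ attainableRegion p d := by
  rw [attainableRegion_eq_kernelSums, ← sum_letterTriple]
  exact sum_mem_kernelSums _ hpu fun u z => g (u, z)

variable [Nonempty Xr] [Nonempty Xh] (p : Xr × Xh × Z → ℝ) (d : Xr × Xhat → ℝ)

theorem convex_attainableRegion : Convex ℝ (attainableRegion p d) := by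
  rw [attainableRegion_eq_kernelSums]
  exact convex_kernelSums (letterTriple_smul p d)

theorem isCompact_attainableRegion : IsCompact (attainableRegion p d) := by
  rw [attainableRegion_eq_kernelSums]
  exact isCompact_kernelSums (letterTriple_smul p d) (continuous_letterTriple p d)

end AttainableRegion

section Code

variable {ι W Xr Xh Z Xhat : Type} [Fintype ι] [DecidableEq ι]
  [Fintype Xr] [Fintype Xh] [Fintype Z]

/-- What the decoder observes of the source block `s`: the message `W` and the side information
`Z^n`. -/
def received (enc : (ι → Xr × Xh) → W) (s : ι → Xr × Xh × Z) : W × (ι → Z) :=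
  (enc fun j => ((s j).1, (s j).2.1), fun j => (s j).2.2)

/-- The auxiliary variable `U_i` of the `i`-th letter: the message together with the side
information at all other positions. -/
def auxiliary (enc : (ι → Xr × Xh) → W) (i : ι) (s : ι → Xr × Xh × Z) :
    W × ({j // j ≠ i} → Z) :=
  (enc fun j => ((s j).1, (s j).2.1), fun j => (s j).2.2)

/-- The conditional law of `auxiliary enc i` given the letter `(X_r, X_h)` at position `i`. -/
noncomputable def auxiliaryKernel (p : Xr × Xh × Z → ℝ) (enc : (ι → Xr × Xh) → W) (i : ι)
    (x : Xr × Xh) : W × ({j // j ≠ i} → Z) → ℝ :=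
  law (iidLaw p) fun r : {j // j ≠ i} → Xr × Xh × Z =>
    (enc ((Equiv.funSplitAt i (Xr × Xh)).symm (x, fun j => ((r j).1, (r j).2.1))),
      fun j => (r j).2.2)

/-- The reconstruction of the `i`-th letter from its auxiliary variable and side information. -/
def letterDecoder (dec : W × (ι → Z) → ι → Xhat) (i : ι)
    (q : (W × ({j // j ≠ i} → Z)) × Z) : Xhat :=
  dec (q.1.1, (Equiv.funSplitAt i Z).symm (q.2, q.1.2)) i

theorem law_letter_auxiliary (p : Xr × Xh × Z → ℝ) (enc : (ι → Xr × Xh) → W) (i : ι) :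
    law (iidLaw p) (fun s => (s i, auxiliary enc i s)) = jointLaw p (auxiliaryKernel p enc i) := by
  have hinput (s : ι → Xr × Xh × Z) : (Equiv.funSplitAt i (Xr × Xh)).symm
      (((s i).1, (s i).2.1), fun j => ((s j).1, (s j).2.1)) = fun j => ((s j).1, (s j).2.1) :=
    (Equiv.funSplitAt i (Xr × Xh)).symm_apply_apply fun j => ((s j).1, (s j).2.1)
  have hsplit := law_iidLaw_prodMk p i fun x (r : {j // j ≠ i} → Xr × Xh × Z) =>
    (enc ((Equiv.funSplitAt i (Xr × Xh)).symm
      ((x.1, x.2.1), fun j => ((r j).1, (r j).2.1))), fun j => (r j).2.2)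
  simp only [hinput] at hsplit
  exact hsplit

variable [Fintype W]

theorem condEntropy_letter {γ : Type} [Fintype γ] (p : Xr × Xh × Z → ℝ)
    (enc : (ι → Xr × Xh) → W) (i : ι) (A : Xr × Xh × Z → γ) :
    condEntropy (iidLaw p) (fun s : ι → Xr × Xh × Z => A (s i)) (received enc) =
      condEntropy (jointLaw p (auxiliaryKernel p enc i)) (fun q => A q.1)
        fun q => (q.2, q.1.2.2) := by
  have hinj : Function.Injective fun q : W × (ι → Z) =>
      ((q.1, fun j : {j // j ≠ i} => q.2 j), q.2 i) := by
    rintro ⟨w, z⟩ ⟨w', z'⟩ h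
    simp only [Prod.mk.injEq] at h
    exact Prod.ext h.1.1 ((Equiv.funSplitAt i Z).injective (Prod.ext h.2 h.1.2))
  rw [← law_letter_auxiliary, condEntropy_law, ← condEntropy_comp_injective _ _ _ hinj]
  rfl

theorem sum_iidLaw_mul_distortion [Fintype Xhat] (p : Xr × Xh × Z → ℝ) (d : Xr × Xhat → ℝ)
    (enc : (ι → Xr × Xh) → W) (dec : W × (ι → Z) → ι → Xhat) (i : ι) :
    ∑ s : ι → Xr × Xh × Z, iidLaw p s * d ((s i).1, dec (received enc s) i) =
      slDistortion p d (auxiliaryKernel p enc i) (letterDecoder dec i) := by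
  have hside (s : ι → Xr × Xh × Z) : (Equiv.funSplitAt i Z).symm
      ((s i).2.2, fun j => (s j).2.2) = fun j => (s j).2.2 :=
    (Equiv.funSplitAt i Z).symm_apply_apply fun j => (s j).2.2
  rw [slDistortion_eq, ← law_letter_auxiliary,
    sum_law_mul _ _ fun q : (Xr × Xh × Z) × (W × ({j // j ≠ i} → Z)) =>
      d (q.1.1, letterDecoder dec i (q.2, q.1.2.2))]
  simp only [letterDecoder, auxiliary, hside, received]

theorem condEntropy_hidden_le_sum {p : Xr × Xh × Z → ℝ} (hp : IsPMF p)
    (enc : (ι → Xr × Xh) → W) :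
    condEntropy (iidLaw p) (fun (s : ι → Xr × Xh × Z) i => (s i).2.1) (received enc) ≤
      ∑ i, slEquivocation p (auxiliaryKernel p enc i) := by
  refine (condEntropy_pi_le_sum (isPMF_iidLaw hp).1 _ _).trans_eq ?_
  exact Finset.sum_congr rfl fun i _ => by
    rw [slEquivocation_eq, condEntropy_letter p enc i fun x => x.2.1]

theorem card_mul_inputEntropy_sub_logb_card_le_sum {p : Xr × Xh × Z → ℝ} (hp : IsPMF p)
    (enc : (ι → Xr × Xh) → W) :
    Fintype.card ι * inputEntropy p - Real.logb 2 (Fintype.card W) ≤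
      ∑ i, inputEquivocation p (auxiliaryKernel p enc i) := by
  calc Fintype.card ι * inputEntropy p - Real.logb 2 (Fintype.card W)
      = condEntropy (iidLaw p) (fun (s : ι → Xr × Xh × Z) j => ((s j).1, (s j).2.1))
          (fun s j => (s j).2.2) - Real.logb 2 (Fintype.card W) := by
        rw [inputEntropy, ← condEntropy_iidLaw hp (fun x => (x.1, x.2.1)) fun x => x.2.2]
    _ ≤ condEntropy (iidLaw p) (fun (s : ι → Xr × Xh × Z) j => ((s j).1, (s j).2.1))
          (received enc) :=
        condEntropy_sub_logb_card_le (isPMF_iidLaw hp) _ _ enc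
    _ ≤ ∑ i, condEntropy (iidLaw p) (fun s : ι → Xr × Xh × Z => ((s i).1, (s i).2.1))
          (received enc) :=
        condEntropy_pi_le_sum (isPMF_iidLaw hp).1 _ _
    _ = _ := Finset.sum_congr rfl fun i _ => condEntropy_letter p enc i fun x => (x.1, x.2.1)

end Code

section Achievability

variable {Xr Xh Z Xhat : Type} [Fintype Xr] [Fintype Xh] [Fintype Z] [Fintype Xhat]

theorem codeDistortion_eq (p : Xr × Xh × Z → ℝ) (d : Xr × Xhat → ℝ) {n M : ℕ}
    (enc : (Fin n → Xr × Xh) → Fin M) (dec : Fin M × (Fin n → Z) → Fin n → Xhat) :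
    codeDistortion p d n M enc dec =
      (n : ℝ)⁻¹ * ∑ i, slDistortion p d (auxiliaryKernel p enc i) (letterDecoder dec i) := by
  simp only [codeDistortion, ← sum_iidLaw_mul_distortion, mul_left_comm _ (n : ℝ)⁻¹,
    ← Finset.mul_sum]
  rw [Finset.sum_comm]
  simp only [← Finset.mul_sum]
  rfl

theorem codeEquivocation_eq (p : Xr × Xh × Z → ℝ) {n M : ℕ}
    (enc : (Fin n → Xr × Xh) → Fin M) :
    codeEquivocation p n M enc = (n : ℝ)⁻¹ *
      condEntropy (iidLaw p) (fun (s : Fin n → Xr × Xh × Z) i => (s i).2.1) (received enc) := by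
  classical
  rw [codeEquivocation, condEntropy]
  congr 2
  funext ⟨xh, w, z⟩
  rw [← sum_law_prodMk_left _ (fun (s : Fin n → Xr × Xh × Z) i => (s i).1)]
  refine Finset.sum_congr rfl fun xr _ => ?_
  have hfiber (s : Fin n → Xr × Xh × Z) :
      ((fun i => (s i).1), (fun i => (s i).2.1), received enc s) = (xr, xh, w, z) ↔
      s = (fun i => (xr i, xh i, z i)) ∧ enc (fun i => (xr i, xh i)) = w := by
    simp only [received, Prod.mk.injEq]
    constructor
    · rintro ⟨rfl, rfl, rfl, rfl⟩
      exact ⟨rfl, rfl⟩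
    · rintro ⟨rfl, rfl⟩
      exact ⟨rfl, rfl, rfl, rfl⟩
  simp only [law, Finset.sum_filter, hfiber, ite_and, Finset.sum_ite_eq', Finset.mem_univ, if_true]
  rfl

variable [Nonempty Xr] [Nonempty Xh] {p : Xr × Xh × Z → ℝ}

theorem exists_mem_attainableRegion_of_code (hp : IsPMF p) (d : Xr × Xhat → ℝ) {n M : ℕ}
    (hn : 0 < n) (enc : (Fin n → Xr × Xh) → Fin M) (dec : Fin M × (Fin n → Z) → Fin n → Xhat) :
    ∃ y ∈ attainableRegion p d, y.1 = codeDistortion p d n M enc dec ∧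
      codeEquivocation p n M enc ≤ y.2.1 ∧
      inputEntropy p - (n : ℝ)⁻¹ * Real.logb 2 M ≤ y.2.2 := by
  have hn' : (n : ℝ) ≠ 0 := by exact_mod_cast hn.ne'
  have hkernel (i : Fin n) (x : Xr × Xh) : IsPMF (auxiliaryKernel p enc i x) :=
    isPMF_law (isPMF_iidLaw hp) _
  refine ⟨∑ i, (n : ℝ)⁻¹ • slTriple p d (auxiliaryKernel p enc i) (letterDecoder dec i),
    (convex_attainableRegion p d).sum_mem (fun _ _ => by positivity) (by simp [hn'])
      fun i _ => slTriple_mem_attainableRegion p d (hkernel i) _, ?_, ?_, ?_⟩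
  · simp only [Prod.fst_sum, Prod.smul_fst, slTriple, smul_eq_mul, codeDistortion_eq,
      Finset.mul_sum]
  · simp only [Prod.fst_sum, Prod.snd_sum, Prod.smul_fst, Prod.smul_snd, slTriple, smul_eq_mul,
      codeEquivocation_eq, ← Finset.mul_sum]
    gcongr
    exact condEntropy_hidden_le_sum hp enc
  · simp only [Prod.snd_sum, Prod.smul_snd, slTriple, smul_eq_mul, ← Finset.mul_sum]
    have hrate := card_mul_inputEntropy_sub_logb_card_le_sum hp enc
    rw [Fintype.card_fin, Fintype.card_fin] at hrate
    calc inputEntropy p - (n : ℝ)⁻¹ * Real.logb 2 M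
        = (n : ℝ)⁻¹ * (n * inputEntropy p - Real.logb 2 M) := by
          rw [mul_sub, inv_mul_cancel_left₀ hn']
      _ ≤ _ := by gcongr

theorem exists_mem_attainableRegion_of_achievableTriple (hp : IsPMF p) {d : Xr × Xhat → ℝ}
    {R D E : ℝ} (h : AchievableTriple p d R D E) :
    ∃ y ∈ attainableRegion p d, y.1 ≤ D ∧ E ≤ y.2.1 ∧ inputEntropy p - R ≤ y.2.2 := by
  let excess (y : ℝ × ℝ × ℝ) : ℝ := max (y.1 - D) (max (E - y.2.1) (inputEntropy p - R - y.2.2))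
  have happrox (ε : ℝ) (hε : 0 < ε) : ∃ y ∈ attainableRegion p d, excess y ≤ ε := by
    obtain ⟨n, M, enc, dec, hn, hM, hrate, hdist, hequiv⟩ := h ε hε
    obtain ⟨y, hy, hy_dist, hy_equiv, hy_rate⟩ :=
      exists_mem_attainableRegion_of_code hp d hn enc dec
    have hn' : (0 : ℝ) < n := by exact_mod_cast hn
    have hlog : (n : ℝ)⁻¹ * Real.logb 2 M ≤ R + ε := by
      rw [inv_mul_le_iff₀ hn', Real.logb_le_iff_le_rpow one_lt_two (by exact_mod_cast hM)]
      exact hrate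
    refine ⟨y, hy, max_le ?_ (max_le ?_ ?_)⟩ <;> linarith
  obtain ⟨y, hy, hle⟩ := exists_le_zero_of_forall_pos_exists_le (isCompact_attainableRegion p d)
    (f := excess) (by fun_prop) happrox
  simp only [excess, max_le_iff] at hle
  exact ⟨y, hy, by linarith, by linarith, by linarith⟩

theorem bddBelow_setOf_slRate (p : Xr × Xh × Z → ℝ) (d : Xr × Xhat → ℝ) (D E : ℝ) :
    BddBelow {r : ℝ | ∃ (k : ℕ) (pu : Xr × Xh → Fin k → ℝ) (g : Fin k × Z → Xhat),
      (∀ a, IsPMF (pu a)) ∧ slDistortion p d pu g ≤ D ∧ E ≤ slEquivocation p pu ∧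
        r = slRate p pu} := by
  obtain ⟨C, hC⟩ := (isCompact_attainableRegion p d).bddAbove_image
    (f := fun y => y.2.2) (by fun_prop)
  refine ⟨inputEntropy p - C, ?_⟩
  rintro _ ⟨k, pu, g, hpu, -, -, rfl⟩
  rw [slRate_eq_inputEntropy_sub p hpu]
  exact sub_le_sub_left (hC ⟨_, ⟨k, pu, g, hpu, rfl⟩, rfl⟩) _

end Achievability

/-- Rate converse of the side-information characterization: if the triple `(R, D, E)` is
achievable, then `R ≥ R(D, E)`, where `R(D, E)` is the infimum of
`I(X_r, X_h ; U) - I(Z ; U)` over all `(D, E)`-admissible single-letter choices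
`(p(u | x_r, x_h), g)`. -/
theorem rate_converse {Xr Xh Z Xhat : Type}
    [Fintype Xr] [Fintype Xh] [Fintype Z] [Fintype Xhat]
    [Nonempty Xr] [Nonempty Xh] [Nonempty Z] [Nonempty Xhat]
    (p : Xr × Xh × Z → ℝ) (hp : IsPMF p)
    (d : Xr × Xhat → ℝ) (hd : ∀ a, 0 ≤ d a)
    (R D E : ℝ) (h : AchievableTriple p d R D E) :
    RDE p d D E ≤ R := by
  obtain ⟨_, ⟨k, pu, g, hpu, rfl⟩, hD, hE, hR⟩ :=
    exists_mem_attainableRegion_of_achievableTriple hp h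
  calc RDE p d D E ≤ slRate p pu :=
        csInf_le (bddBelow_setOf_slRate p d D E) ⟨k, pu, g, hpu, hD, hE, rfl⟩
    _ ≤ R := by
        rw [slRate_eq_inputEntropy_sub p hpu]
        exact sub_le_comm.1 hR
end

section
/- Reduction when there is no side information: if the side-information alphabet Z is trivial (a single element), then the auxiliary variable can be taken to be the reconstruction itself, i.e., Γ(D) = sup H(X_h | X̂_r), where the supremum is over all conditional pmfs p(x̂_r | x_r, x_h) on X̂_r satisfying E[d(X_r, X̂_r)] ≤ D under the joint law p(x_r, x_h) p(x̂_r | x_r, x_h). -/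
open scoped BigOperators

/-!
Conditioning on a function `f(U)` of `U` cannot decrease entropy: on each fibre of `f` this is the
log-sum inequality. Hence replacing `U` by the reconstruction `g(U)` keeps the expected distortion
and does not decrease `H(X_h | ·)`. The same step along a bijection `X̂_r ≃ Fin k` turns a
reconstruction channel into an auxiliary channel, which gives the other inequality.
-/

/-- The law of `g(U)` when `U` has law `f`; `f` need not be normalized. -/
def pushforward {β γ : Type*} [Fintype β] [DecidableEq γ] (g : β → γ) (f : β → ℝ) (y : γ) : ℝ :=
  ∑ u with g u = y, f u

section Pushforward

variable {β γ : Type*} [Fintype β] [Fintype γ] [DecidableEq γ] (g : β → γ)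

lemma sum_pushforward_mul (f : β → ℝ) (F : γ → ℝ) :
    ∑ y, pushforward g f y * F y = ∑ u, f u * F (g u) := by
  simp only [pushforward, Finset.sum_mul]
  rw [← Finset.sum_fiberwise Finset.univ g fun u => f u * F (g u)]
  refine Finset.sum_congr rfl fun y _ => Finset.sum_congr rfl fun u hu => ?_
  rw [(Finset.mem_filter.mp hu).2]

lemma sum_pushforward (f : β → ℝ) : ∑ y, pushforward g f y = ∑ u, f u :=
  Finset.sum_fiberwise Finset.univ g f

end Pushforward

lemma IsPMF.pushforward {β γ : Type} [Fintype β] [Fintype γ] [DecidableEq γ] {f : β → ℝ}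
    (hf : IsPMF f) (g : β → γ) : IsPMF (pushforward g f) :=
  ⟨fun _ => Finset.sum_nonneg fun u _ => hf.1 u, (sum_pushforward g f).trans hf.2⟩

/-- The tangent to `t ↦ t log t` at `r` lies below it; this is that bound at `t = x / y`,
multiplied by `y`. -/
lemma mul_log_add_sub_le_mul_log_div {x y r : ℝ} (hx : 0 ≤ x) (hy : 0 ≤ y)
    (hxy : y = 0 → x = 0) (hr : 0 ≤ r) (hxr : r = 0 → x = 0) :
    x * Real.log r + (x - y * r) ≤ x * Real.log (x / y) := by
  rcases hx.eq_or_lt with rfl | hx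
  · simpa using mul_nonneg hy hr
  have hy : 0 < y := hy.lt_of_ne' fun h => hx.ne' (hxy h)
  have hr : 0 < r := hr.lt_of_ne' fun h => hx.ne' (hxr h)
  have hlog : Real.log r - Real.log (x / y) ≤ r / (x / y) - 1 := by
    rw [← Real.log_div hr.ne' (div_pos hx hy).ne']
    exact Real.log_le_sub_one_of_pos (by positivity)
  have hscaled := mul_le_mul_of_nonneg_left hlog hx.le
  have hcancel : x * (r / (x / y) - 1) = y * r - x := by field_simp
  linarith

lemma log_sum_inequality {ι : Type*} (s : Finset ι) {x y : ι → ℝ} (hx : ∀ i ∈ s, 0 ≤ x i)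
    (hy : ∀ i ∈ s, 0 ≤ y i) (hxy : ∀ i ∈ s, y i = 0 → x i = 0) :
    (∑ i ∈ s, x i) * Real.log ((∑ i ∈ s, x i) / ∑ i ∈ s, y i) ≤
      ∑ i ∈ s, x i * Real.log (x i / y i) := by
  set X := ∑ i ∈ s, x i
  set Y := ∑ i ∈ s, y i
  have hXY : Y = 0 → X = 0 := fun hY => Finset.sum_eq_zero fun i hi =>
    hxy i hi ((Finset.sum_eq_zero_iff_of_nonneg hy).mp hY i hi)
  have hratio : X / Y = 0 → ∀ i ∈ s, x i = 0 := fun h =>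
    (Finset.sum_eq_zero_iff_of_nonneg hx).mp ((div_eq_zero_iff.mp h).elim id hXY)
  calc X * Real.log (X / Y)
      = ∑ i ∈ s, (x i * Real.log (X / Y) + (x i - y i * (X / Y))) := by
        rw [Finset.sum_add_distrib, Finset.sum_sub_distrib, ← Finset.sum_mul, ← Finset.sum_mul,
          mul_div_cancel_of_imp' hXY, sub_self, add_zero]
    _ ≤ ∑ i ∈ s, x i * Real.log (x i / y i) := Finset.sum_le_sum fun i hi =>
        mul_log_add_sub_le_mul_log_div (hx i hi) (hy i hi) (hxy i hi)
          (div_nonneg (Finset.sum_nonneg hx) (Finset.sum_nonneg hy)) (hratio · i hi)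

lemma eq_zero_of_sum_fst_eq_zero {α β : Type*} [Fintype α] {v : α × β → ℝ}
    (hv : ∀ q, 0 ≤ v q) {b : β} (hb : ∑ a, v (a, b) = 0) (a : α) : v (a, b) = 0 :=
  (Finset.sum_eq_zero_iff_of_nonneg fun a _ => hv (a, b)).mp hb a (Finset.mem_univ a)

section ConditionalEntropy

variable {α β γ : Type} [Fintype α] [Fintype β] [Fintype γ] {v : α × β → ℝ}

lemma condH2_eq_neg_sum_mul_log_div (hv : ∀ q, 0 ≤ v q) :
    condH2 v =
      -(∑ a, ∑ b, v (a, b) * Real.log (v (a, b) / ∑ a', v (a', b))) / Real.log 2 := by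
  have hterm (a : α) (b : β) : v (a, b) * Real.log (v (a, b) / ∑ a', v (a', b)) =
      v (a, b) * Real.log (v (a, b)) - v (a, b) * Real.log (∑ a', v (a', b)) := by
    rcases eq_or_ne (v (a, b)) 0 with h | h
    · simp [h]
    · rw [Real.log_div h fun hb => h (eq_zero_of_sum_fst_eq_zero hv hb a), mul_sub]
  have hmarginal : ∑ a, ∑ b, v (a, b) * Real.log (∑ a', v (a', b)) =
      ∑ b, (∑ a, v (a, b)) * Real.log (∑ a', v (a', b)) := by
    simp only [Finset.sum_mul]
    exact Finset.sum_comm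
  simp only [hterm, Finset.sum_sub_distrib, hmarginal, condH2, H2, Fintype.sum_prod_type,
    Real.logb, ← mul_div_assoc, ← Finset.sum_div]
  ring

variable [DecidableEq γ]

lemma condH2_le_condH2_pushforward (hv : ∀ q, 0 ≤ v q) (g : β → γ) :
    condH2 v ≤ condH2 fun q : α × γ => pushforward g (fun b => v (q.1, b)) q.2 := by
  have hpush (q : α × γ) : 0 ≤ pushforward g (fun b => v (q.1, b)) q.2 :=
    Finset.sum_nonneg fun b _ => hv (q.1, b)
  have hmarginal (y : γ) : ∑ a, pushforward g (fun b => v (a, b)) y =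
      ∑ b with g b = y, ∑ a, v (a, b) := Finset.sum_comm
  rw [condH2_eq_neg_sum_mul_log_div hv, condH2_eq_neg_sum_mul_log_div hpush]
  gcongr with a
  rw [← Finset.sum_fiberwise Finset.univ g]
  gcongr with y
  rw [hmarginal]
  exact log_sum_inequality {b | g b = y} (fun b _ => hv (a, b))
    (fun b _ => Finset.sum_nonneg fun a' _ => hv (a', b))
    (fun b _ hb => eq_zero_of_sum_fst_eq_zero hv hb a)

end ConditionalEntropy

/-- `D`-admissibility of an auxiliary channel `w(u | x)` with decoder `g` for a source `p` on `X`: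
the expected cost `E[c(X, g(U))]` is at most `D`. The cost may depend on the whole source symbol,
so a distortion of `X_r` alone is the case `c (x_r, x_h) y = d (x_r, y)`. -/
def IsAdmissible {X U Y : Type} [Fintype X] [Fintype U] (p : X → ℝ) (c : X → Y → ℝ) (D : ℝ)
    (w : X → U → ℝ) (g : U → Y) : Prop :=
  (∀ x, IsPMF (w x)) ∧ ∑ x, ∑ u, p x * w x u * c x (g u) ≤ D

/-- The joint law of `(X_h, U)` when `(X_r, X_h)` has law `p` and `U` is the output of the
channel `w`. -/
def hiddenAuxLaw {Xr Xh U : Type} [Fintype Xr] (p : Xr × Xh → ℝ) (w : Xr × Xh → U → ℝ)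
    (q : Xh × U) : ℝ :=
  ∑ xr, p (xr, q.1) * w (xr, q.1) q.2

lemma IsAdmissible.pushforward {X U V Y : Type} [Fintype X] [Fintype U] [Fintype V]
    [DecidableEq V] {p : X → ℝ} {c : X → Y → ℝ} {D : ℝ} {w : X → U → ℝ} {f : U → V} {g : V → Y}
    (hw : IsAdmissible p c D w (g ∘ f)) :
    IsAdmissible p c D (fun x => pushforward f (w x)) g := by
  refine ⟨fun x => (hw.1 x).pushforward f, hw.2.trans_eq' ?_⟩
  simp only [mul_assoc, ← Finset.mul_sum, sum_pushforward_mul, Function.comp_apply]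

section HiddenAuxLaw

variable {Xr Xh U V : Type} [Fintype Xr] [Fintype U] [DecidableEq V]

lemma hiddenAuxLaw_pushforward (p : Xr × Xh → ℝ) (w : Xr × Xh → U → ℝ) (f : U → V) (q : Xh × V) :
    hiddenAuxLaw p (fun x => pushforward f (w x)) q =
      pushforward f (fun u => hiddenAuxLaw p w (q.1, u)) q.2 := by
  simp only [hiddenAuxLaw, pushforward, Finset.mul_sum]
  exact Finset.sum_comm

lemma condH2_hiddenAuxLaw_le_pushforward [Fintype Xh] [Fintype V] {p : Xr × Xh → ℝ}
    (hp : ∀ x, 0 ≤ p x) {w : Xr × Xh → U → ℝ} (hw : ∀ x u, 0 ≤ w x u) (f : U → V) :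
    condH2 (hiddenAuxLaw p w) ≤ condH2 (hiddenAuxLaw p fun x => pushforward f (w x)) := by
  rw [funext (hiddenAuxLaw_pushforward p w f)]
  exact condH2_le_condH2_pushforward
    (fun _ => Finset.sum_nonneg fun _ _ => mul_nonneg (hp _) (hw _ _)) f

end HiddenAuxLaw

theorem gamma_eq_sup_over_reconstruction_channels_general {Xr Xh Xhat : Type}
    [Fintype Xr] [Fintype Xh] [Fintype Xhat] {p : Xr × Xh → ℝ} (hp : ∀ x, 0 ≤ p x)
    (c : Xr × Xh → Xhat → ℝ) (D : ℝ) :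
    sSup {e : ℝ | ∃ (k : ℕ) (pu : Xr × Xh → Fin k → ℝ) (g : Fin k → Xhat),
        IsAdmissible p c D pu g ∧ e = condH2 (hiddenAuxLaw p pu)} =
      sSup {e : ℝ | ∃ w : Xr × Xh → Xhat → ℝ,
        IsAdmissible p c D w id ∧ e = condH2 (hiddenAuxLaw p w)} := by
  classical
  apply csSup_eq_csSup_of_forall_exists_le
  · rintro _ ⟨k, pu, g, hpu, rfl⟩
    exact ⟨_, ⟨_, hpu.pushforward (f := g) (g := id), rfl⟩,
      condH2_hiddenAuxLaw_le_pushforward hp (fun x => (hpu.1 x).1) g⟩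
  · rintro _ ⟨w, hw, rfl⟩
    let label := Fintype.equivFin Xhat
    rw [← label.symm_comp_self] at hw
    exact ⟨_, ⟨_, _, label.symm, hw.pushforward, rfl⟩,
      condH2_hiddenAuxLaw_le_pushforward hp (fun x => (hw.1 x).1) label⟩

/-- Reduction when there is no side information: if the side-information alphabet `Z`
is trivial, the auxiliary variable can be taken to be the reconstruction itself, i.e.
`Γ(D) = sup H(X_h | X̂_r)` over all conditional pmfs `p(x̂_r | x_r, x_h)` satisfying
`E[d(X_r, X̂_r)] ≤ D` under the joint law `p(x_r, x_h) p(x̂_r | x_r, x_h)`. Here `Γ(D)`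
is the supremum of `H(X_h | U)` over all finite auxiliary alphabets `U = Fin k`,
conditional pmfs `p(u | x_r, x_h)` and functions `g : U → X̂_r` with
`E[d(X_r, g(U))] ≤ D`. -/
theorem gamma_eq_sup_over_reconstruction_channels {Xr Xh Xhat : Type}
    [Fintype Xr] [Fintype Xh] [Fintype Xhat]
    [Nonempty Xr] [Nonempty Xh] [Nonempty Xhat]
    (p : Xr × Xh → ℝ) (hp : IsPMF p)
    (d : Xr × Xhat → ℝ) (hd : ∀ a, 0 ≤ d a) (D : ℝ) :
    sSup { e : ℝ | ∃ (k : ℕ) (pu : Xr × Xh → Fin k → ℝ) (g : Fin k → Xhat),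
        (∀ a, IsPMF (pu a)) ∧
        (∑ x : Xr × Xh, ∑ u : Fin k, p x * pu x u * d (x.1, g u)) ≤ D ∧
        e = condH2 (fun q : Xh × Fin k => ∑ xr : Xr, p (xr, q.1) * pu (xr, q.1) q.2) } =
      sSup { e : ℝ | ∃ (w : Xr × Xh → Xhat → ℝ),
        (∀ a, IsPMF (w a)) ∧
        (∑ x : Xr × Xh, ∑ y : Xhat, p x * w x y * d (x.1, y)) ≤ D ∧
        e = condH2 (fun q : Xh × Xhat => ∑ xr : Xr, p (xr, q.1) * w (xr, q.1) q.2) } := by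
  simp only [← and_assoc]
  exact gamma_eq_sup_over_reconstruction_channels_general hp.1 (fun x y => d (x.1, y)) D
end

section
/- Maximal equivocation for Hamming distortion (optimality of reverse waterfilling): let 𝒳, p, λ, S, D and the pmf q and channel w be as in the reverse-waterfilling construction, with the marginal consistency condition Σ_{x̂} q(x̂) w(x | x̂) = p(x) for all x and the row normalization (1 − D) + (|S| − 1)λ + Σ_{x ∉ S} p(x) = 1. Then for every joint pmf on 𝒳 × 𝒳 whose X-marginal is p and which satisfies Pr[X ≠ X̂] ≤ D, the conditional entropy satisfies H(X | X̂) ≤ −(1 − D) log(1 − D) − (|S| − 1) λ log λ − Σ_{x ∉ S} p(x) log p(x); i.e., the reverse-waterfilling channel maximizes the equivocation H(X | X̂) (equivalently, minimizes I(X ; X̂)) among all channels meeting the Hamming-distortion constraint D. -/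
open scoped BigOperators

/-!
By Gibbs' inequality, `H(X | X̂) ≤ -∑ π log v` for every subnormalised channel `v` from `X̂` to `X`.
Take `v(x | x̂) = min (p x) λ`, multiplied by `(1 - D) / λ` on the diagonal. The logarithm of this
channel is a function of `x` plus a multiple of the indicator of `x = x̂`, so the bound depends on
`π` only through its `X`-marginal and `Pr[X = X̂]`. As the diagonal factor is at least `1`, the
constraint `Pr[X = X̂] ≥ 1 - D` turns it into the claimed value.
-/

section Sums

open Finset

variable {α M : Type*} [Fintype α] [DecidableEq α] [AddCommMonoid M]

theorem sum_diagonal_add_sum_ne (f : α × α → M) :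
    ∑ x, f (x, x) + ∑ z, (if z.1 ≠ z.2 then f z else 0) = ∑ z, f z := by
  have hdiag : ∑ x, f (x, x) = ∑ z : α × α, if z.1 = z.2 then f z else 0 := by
    simp [Fintype.sum_prod_type]
  simp only [hdiag, ne_eq, ← sum_filter, sum_filter_add_sum_filter_not]

theorem sum_apply_min_eq_sum_add_sum_sdiff {R : Type*} [LinearOrder R] {S : Finset α}
    {p : α → R} {c : R} (hS : ∀ x ∈ S, c ≤ p x) (hSc : ∀ x ∉ S, p x ≤ c)
    (F : α → R → M) :
    ∑ x, F x (min (p x) c) = ∑ x ∈ S, F x c + ∑ x ∈ univ \ S, F x (p x) := by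
  rw [← sum_sdiff (subset_univ S), add_comm]
  congr 1
  · exact sum_congr rfl fun x hx ↦ by rw [min_eq_right (hS x hx)]
  · exact sum_congr rfl fun x hx ↦ by rw [min_eq_left (hSc x (mem_sdiff.1 hx).2)]

end Sums

section Gibbs

open Finset
open Real (log logb log_pos log_div log_le_sub_one_of_pos logb_mul)

theorem mul_logb_sub_mul_logb_le {b x y : ℝ} (hb : 1 < b) (hx : 0 ≤ x) (hy : 0 ≤ y)
    (hxy : y = 0 → x = 0) : x * logb b y - x * logb b x ≤ (y - x) / log b := by
  have hlog : x * log y - x * log x ≤ y - x := by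
    rcases hx.eq_or_lt with rfl | hx
    · simpa using hy
    · have hy : 0 < y := hy.lt_of_ne' fun h ↦ hx.ne' (hxy h)
      calc x * log y - x * log x = x * log (y / x) := by
            rw [log_div hy.ne' hx.ne', mul_sub]
        _ ≤ x * (y / x - 1) :=
            mul_le_mul_of_nonneg_left (log_le_sub_one_of_pos (div_pos hy hx)) hx.le
        _ = y - x := by field_simp
  calc x * logb b y - x * logb b x = (x * log y - x * log x) / log b := by
        simp only [logb]; ring
    _ ≤ (y - x) / log b := div_le_div_of_nonneg_right hlog (log_pos hb).le

theorem sum_mul_logb_le_sum_mul_logb_self {ι : Type*} {s : Finset ι} {f g : ι → ℝ} {b : ℝ}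
    (hb : 1 < b) (hf : ∀ i ∈ s, 0 ≤ f i) (hg : ∀ i ∈ s, 0 ≤ g i)
    (hfg : ∀ i ∈ s, g i = 0 → f i = 0) (hsum : ∑ i ∈ s, g i ≤ ∑ i ∈ s, f i) :
    ∑ i ∈ s, f i * logb b (g i) ≤ ∑ i ∈ s, f i * logb b (f i) := by
  rw [← sub_nonpos]
  calc ∑ i ∈ s, f i * logb b (g i) - ∑ i ∈ s, f i * logb b (f i)
      = ∑ i ∈ s, (f i * logb b (g i) - f i * logb b (f i)) := (sum_sub_distrib ..).symm
    _ ≤ ∑ i ∈ s, (g i - f i) / log b :=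
        sum_le_sum fun i hi ↦ mul_logb_sub_mul_logb_le hb (hf i hi) (hg i hi) (hfg i hi)
    _ = (∑ i ∈ s, g i - ∑ i ∈ s, f i) / log b := by rw [← sum_div, sum_sub_distrib]
    _ ≤ 0 := div_nonpos_of_nonpos_of_nonneg (sub_nonpos.2 hsum) (log_pos hb).le

theorem condH2_le_neg_sum_mul_logb_s9 {α β : Type} [Fintype α] [Fintype β] {π v : α × β → ℝ}
    (hπ : ∀ z, 0 ≤ π z) (hv : ∀ z, 0 ≤ v z) (hv_sum : ∀ b, ∑ a, v (a, b) ≤ 1)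
    (hπv : ∀ z, v z = 0 → π z = 0) :
    condH2 π ≤ -∑ z, π z * logb 2 (v z) := by
  set r : β → ℝ := fun b ↦ ∑ a, π (a, b) with hr
  have hr_nonneg (b : β) : 0 ≤ r b := sum_nonneg fun a _ ↦ hπ (a, b)
  have eq_zero_of_marginal (z : α × β) (h : r z.2 = 0) : π z = 0 :=
    (sum_eq_zero_iff_of_nonneg fun a _ ↦ hπ (a, z.2)).1 h z.1 (mem_univ _)
  have hmass : ∑ z : α × β, r z.2 * v z ≤ ∑ z, π z := by
    simp only [Fintype.sum_prod_type_right, ← mul_sum]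
    exact sum_le_sum fun b _ ↦ mul_le_of_le_one_right (hr_nonneg b) (hv_sum b)
  have hgibbs : ∑ z, π z * logb 2 (r z.2 * v z) ≤ ∑ z, π z * logb 2 (π z) := by
    refine sum_mul_logb_le_sum_mul_logb_self one_lt_two (fun z _ ↦ hπ z)
      (fun z _ ↦ mul_nonneg (hr_nonneg z.2) (hv z)) (fun z _ h ↦ ?_) hmass
    exact (mul_eq_zero.1 h).elim (eq_zero_of_marginal z) (hπv z)
  have hchain (z : α × β) :
      π z * logb 2 (r z.2 * v z) = π z * logb 2 (r z.2) + π z * logb 2 (v z) := by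
    by_cases hz : π z = 0
    · simp [hz]
    · rw [logb_mul (mt (eq_zero_of_marginal z) hz) (mt (hπv z) hz), mul_add]
  have hmarginal : ∑ z : α × β, π z * logb 2 (r z.2) = ∑ b, r b * logb 2 (r b) := by
    simp only [Fintype.sum_prod_type_right, ← sum_mul, hr]
  simp only [hchain, sum_add_distrib, hmarginal] at hgibbs
  simp only [condH2, H2]
  linarith

end Gibbs

section DiagonalTilt

open Finset
open Real (logb logb_mul)

variable {α : Type*} [DecidableEq α]

/-- The matrix, indexed by pairs `(x, x̂)`, all of whose rows `x̂` are the weight `m`, except that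
the diagonal entries are multiplied by `K`. For `m x = min (p x) λ` and `K = (1 - D) / λ`, its rows
`x̂ ∈ S` are those of the reverse-waterfilling channel `w`. -/
def diagonalTilt (m : α → ℝ) (K : ℝ) (z : α × α) : ℝ :=
  m z.1 * if z.1 = z.2 then K else 1

variable {m : α → ℝ} {K : ℝ}

theorem diagonalTilt_nonneg (hm : ∀ x, 0 ≤ m x) (hK : 0 ≤ K) (z : α × α) :
    0 ≤ diagonalTilt m K z :=
  mul_nonneg (hm z.1) (by split_ifs <;> positivity)

theorem diagonalTilt_eq_zero_iff (hK : K ≠ 0) (z : α × α) :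
    diagonalTilt m K z = 0 ↔ m z.1 = 0 := by
  by_cases h : z.1 = z.2 <;> simp [diagonalTilt, h, hK]

variable [Fintype α]

theorem sum_diagonalTilt (y : α) :
    ∑ x, diagonalTilt m K (x, y) = ∑ x, m x + (K - 1) * m y := by
  have hsplit (x : α) :
      diagonalTilt m K (x, y) = m x + if x = y then (K - 1) * m x else 0 := by
    unfold diagonalTilt; split_ifs <;> ring
  simp [hsplit, sum_add_distrib]

theorem sum_mul_logb_diagonalTilt {b : ℝ} {π : α × α → ℝ} (hK : K ≠ 0)
    (hπ : ∀ z, m z.1 = 0 → π z = 0) :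
    ∑ z, π z * logb b (diagonalTilt m K z) =
      ∑ x, (∑ y, π (x, y)) * logb b (m x) + (∑ x, π (x, x)) * logb b K := by
  have hsplit (x y : α) : π (x, y) * logb b (diagonalTilt m K (x, y)) =
      π (x, y) * logb b (m x) + if x = y then π (x, y) * logb b K else 0 := by
    by_cases hx : m x = 0
    · simp [hπ (x, y) hx]
    · unfold diagonalTilt
      split_ifs
      · rw [logb_mul hx hK, mul_add]
      · simp
  simp [Fintype.sum_prod_type, hsplit, sum_add_distrib, sum_mul]

end DiagonalTilt

section Equivocation

open Finset
open Real (logb logb_nonneg)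

variable {α : Type} [Fintype α] {π : α × α → ℝ}

theorem condH2_le_of_diagonalTilt {m : α → ℝ} {K : ℝ}
    (hπ : ∀ z, 0 ≤ π z) (hm : ∀ x, 0 ≤ m x) (hK : 0 < K)
    (hsum : ∀ y, ∑ x, m x + (K - 1) * m y ≤ 1) (hπm : ∀ z, m z.1 = 0 → π z = 0) :
    condH2 π ≤
      -∑ x, (∑ y, π (x, y)) * logb 2 (m x) - (∑ x, π (x, x)) * logb 2 K := by
  classical
  calc condH2 π ≤ -∑ z, π z * logb 2 (diagonalTilt m K z) :=
        condH2_le_neg_sum_mul_logb_s9 hπ (diagonalTilt_nonneg hm hK.le)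
          (fun y ↦ (sum_diagonalTilt y).trans_le (hsum y))
          fun z hz ↦ hπm z ((diagonalTilt_eq_zero_iff hK.ne' z).1 hz)
    _ = _ := by rw [sum_mul_logb_diagonalTilt hK.ne' hπm, neg_add']

/- `log ((1 - D) / lam)` is the Lagrange multiplier of the distortion constraint; it is nonnegative
because `lam ≤ 1 - D`. -/
theorem condH2_le_of_sum_min_le {lam D : ℝ} {p : α → ℝ}
    (hπ : ∀ z, 0 ≤ π z) (hmarg : ∀ x, ∑ y, π (x, y) = p x) (hlam : 0 < lam)
    (hlamD : lam ≤ 1 - D) (hsum : ∑ x, min (p x) lam ≤ D + lam)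
    (hdiag : 1 - D ≤ ∑ x, π (x, x)) :
    condH2 π ≤
      -∑ x, p x * logb 2 (min (p x) lam) - (1 - D) * logb 2 ((1 - D) / lam) := by
  have hK : 1 ≤ (1 - D) / lam := (one_le_div hlam).2 hlamD
  have hp (x : α) : 0 ≤ p x := hmarg x ▸ sum_nonneg fun y _ ↦ hπ (x, y)
  have hrow (y : α) : ∑ x, min (p x) lam + ((1 - D) / lam - 1) * min (p y) lam ≤ 1 :=
    calc ∑ x, min (p x) lam + ((1 - D) / lam - 1) * min (p y) lam
        ≤ (D + lam) + ((1 - D) / lam - 1) * lam :=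
          add_le_add hsum (mul_le_mul_of_nonneg_left (min_le_right _ _) (sub_nonneg.2 hK))
      _ = 1 := by field_simp; ring
  have hπp (z : α × α) (hz : min (p z.1) lam = 0) : π z = 0 := by
    have hpz : p z.1 = 0 := by
      rcases min_choice (p z.1) lam with h | h
      · exact h.symm.trans hz
      · exact absurd (h.symm.trans hz) hlam.ne'
    rw [← hmarg, sum_eq_zero_iff_of_nonneg fun y _ ↦ hπ (z.1, y)] at hpz
    exact hpz z.2 (mem_univ _)
  have hbound := condH2_le_of_diagonalTilt hπ (fun x ↦ le_min (hp x) hlam.le)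
    (one_pos.trans_le hK) hrow hπp
  simp only [hmarg] at hbound
  exact hbound.trans (sub_le_sub_left
    (mul_le_mul_of_nonneg_right hdiag (logb_nonneg one_lt_two hK)) _)

end Equivocation

/-- Maximal equivocation for Hamming distortion (optimality of reverse waterfilling):
with the reverse-waterfilling construction (`S = {x : p(x) > λ}` nonempty, `D ∈ (0,1)`,
output pmf `q`, test channel `w`, marginal consistency and row normalization as stated),
every joint pmf `π(x, xhat)` on `𝒳 × 𝒳` whose `X`-marginal is `p` and which satisfies
`Pr[X ≠ X̂] ≤ D` has conditional entropy
`H(X | X̂) ≤ -(1-D) log(1-D) - (|S|-1) λ log λ - Σ_{x ∉ S} p(x) log p(x)`; i.e., the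
reverse-waterfilling channel maximizes the equivocation among all channels meeting the
Hamming-distortion constraint `D`. -/
theorem reverse_waterfilling_maximizes_equivocation {𝒳 : Type}
    [Fintype 𝒳] [DecidableEq 𝒳] [Nonempty 𝒳]
    (p : 𝒳 → ℝ) (hp : IsPMF p)
    (lam : ℝ) (hlam : 0 < lam)
    (S : Finset 𝒳) (hSdef : S = Finset.univ.filter fun x => lam < p x)
    (hSne : S.Nonempty)
    (D : ℝ) (hD : D ∈ Set.Ioo (0 : ℝ) 1)
    (hrow : (1 - D) + ((S.card : ℝ) - 1) * lam + ∑ x ∈ Finset.univ \ S, p x = 1)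
    (q : 𝒳 → ℝ)
    (hq : q = fun xhat => if xhat ∈ S then (p xhat - lam) / (∑ x ∈ S, (p x - lam)) else 0)
    (w : 𝒳 → 𝒳 → ℝ)
    (hw : w = fun xhat x => if x ∈ S then (if x = xhat then 1 - D else lam) else p x)
    (hmarg : ∀ x, (∑ xhat, q xhat * w xhat x) = p x)
    -- an arbitrary competing joint pmf `π (x, xhat)` of `(X, X̂)`
    (π : 𝒳 × 𝒳 → ℝ) (hπ : IsPMF π)
    (hπmarg : ∀ x, (∑ xhat, π (x, xhat)) = p x)
    (hπdist : (∑ y : 𝒳 × 𝒳, if y.1 ≠ y.2 then π y else 0) ≤ D) :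
    condH2 π ≤
      -(1 - D) * Real.logb 2 (1 - D) - ((S.card : ℝ) - 1) * lam * Real.logb 2 lam -
        ∑ x ∈ Finset.univ \ S, p x * Real.logb 2 (p x) := by
  have hmem (x : 𝒳) : x ∈ S ↔ lam < p x := by simp [hSdef]
  have hS : ∀ x ∈ S, lam ≤ p x := fun x hx ↦ ((hmem x).1 hx).le
  have hSc : ∀ x ∉ S, p x ≤ lam := fun x hx ↦ not_lt.1 (mt (hmem x).2 hx)
  have hmassS : ∑ x ∈ S, p x = (1 - D) + ((S.card : ℝ) - 1) * lam := by
    linarith [hp.2, Finset.sum_sdiff (f := p) (Finset.subset_univ S)]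
  have hlamD : lam ≤ 1 - D := by
    linarith [Finset.card_nsmul_le_sum S p lam hS, nsmul_eq_mul S.card lam]
  have hwater : ∑ x, min (p x) lam = D + lam := by
    rw [sum_apply_min_eq_sum_add_sum_sdiff hS hSc fun _ t ↦ t, Finset.sum_const, nsmul_eq_mul]
    linarith
  have hcross : ∑ x, p x * Real.logb 2 (min (p x) lam) =
      ((1 - D) + ((S.card : ℝ) - 1) * lam) * Real.logb 2 lam +
        ∑ x ∈ Finset.univ \ S, p x * Real.logb 2 (p x) := by
    rw [sum_apply_min_eq_sum_add_sum_sdiff hS hSc fun x t ↦ p x * Real.logb 2 t,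
      ← Finset.sum_mul, hmassS]
  have hdiag : 1 - D ≤ ∑ x, π (x, x) := by
    linarith [hπ.2, sum_diagonal_add_sum_ne π]
  have hbound := condH2_le_of_sum_min_le hπ.1 hπmarg hlam hlamD hwater.le hdiag
  rw [hcross, Real.logb_div (hlam.trans_le hlamD).ne' hlam.ne'] at hbound
  linarith
end
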